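/- arXiv:2504.08717 — 2 statements merged into one kernel-verified Lean document; each statement's English description precedes it below -/
import Mathlib

section
/- Let n ≥ 1 be odd and Γ = Γ_{A_n}, R = ℂ[u,v]^Γ. Then: (i) there exist anti-Poisson involutions θ₁, θ₂, θ₃ of R satisfying θ₁(x)=y, θ₁(y)=x, θ₁(z)=z; θ₂(x)=x, θ₂(y)=y, θ₂(z)=−z; θ₃(x)=−x, θ₃(y)=−y, θ₃(z)=−z; (ii) every anti-Poisson involution of R is conjugate by a graded Poisson automorphism to one of θ₁, θ₂, θ₃; (iii) if n > 1 then θ₁, θ₂, θ₃ are pairwise non-conjugate, while if n = 1 then θ₁ and θ₂ are conjugate and θ₃ is conjugate to neither. -/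
/-!
The bracket with `z = uv` has the monomials as eigenvectors: `{u^a v^b, z} = (a - b) u^a v^b`
(`coeff_pb`). Invariance under `Γ` means that only monomials with `a ≡ b` modulo `n + 1` occur, so
`R` is generated by `x`, `y`, `z` (`adjoin_xyz`), and automorphisms can be compared on these.
A matrix normalizing `Γ` induces an automorphism of `R` which multiplies the bracket by its
determinant (`pb_matSub`); all automorphisms needed below are of this form.

Let `θ` be an anti-Poisson involution. If `θ z = c z`, then `c = ±1` and `θ x`, `θ y` are
eigenvectors of `{·, z}` of degree `n + 1`. For `c = 1` this gives `θ x = α y`, `θ y = α⁻¹ x`, and a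
diagonal rescaling conjugates `θ` to `θ₁`; for `c = -1` it gives `θ x = α x`, `θ y = α y` with
`α = ±1`, that is, `θ₂` or `θ₃` (`vals_of_z`, `core`). For `n > 1` the degree-two part of `R` is
spanned by `z`, so `θ z = c z` always holds. For `n = 1` the degree-two part is the space of all
binary quadratic forms; `θ z` has the same discriminant as `z`, so one of `z ± θ z` is a
nondegenerate eigenvector of `θ`. As `SL₂(ℂ)` carries `z` to a multiple of it, conjugation
reduces to the previous case (`core_one`).

For non-conjugacy: `θ₃` is `-1` in degree two, where `θ₁` fixes `z` and, if `n = 1`, `θ₂` fixes `x`.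
For `n > 1`, `θ₁` and `θ₂` act differently on the line of `z`, and `θ₂`, `θ₃` act differently on the
span of `x` and `y`, which every graded Poisson automorphism preserves.
-/

open MvPolynomial Complex Matrix

noncomputable section

abbrev P2 : Type := MvPolynomial (Fin 2) ℂ

/-- The standard Poisson bracket on `ℂ[u,v]`, where `u = X 0`, `v = X 1`. -/
def pb (f g : P2) : P2 :=
  pderiv 0 f * pderiv 1 g - pderiv 1 f * pderiv 0 g

/-- The algebra endomorphism of `ℂ[u,v]` given by the linear substitution
`X i ↦ ∑ j, m i j • X j`. -/
def matSub (m : Matrix (Fin 2) (Fin 2) ℂ) : P2 →ₐ[ℂ] P2 :=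
  aeval fun i => ∑ j, MvPolynomial.C (m i j) * X j

abbrev SL2 : Type := Matrix.SpecialLinearGroup (Fin 2) ℂ

/-- The action of `g ∈ SL₂(ℂ)` on polynomials: `(g · f)(w) = f (g⁻¹ w)`. -/
def slAct (g : SL2) : P2 →ₐ[ℂ] P2 := matSub (↑(g⁻¹))

/-- The invariant ring `ℂ[u,v]^Γ` as a subalgebra of `ℂ[u,v]`. -/
def invRing (Γ : Subgroup SL2) : Subalgebra ℂ P2 :=
  ⨅ g : Γ, AlgHom.equalizer (slAct (g : SL2)) (AlgHom.id ℂ P2)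

/-- `θ` is a graded algebra automorphism: it preserves homogeneous elements of each degree. -/
def IsGradedAut (Γ : Subgroup SL2) (θ : invRing Γ ≃ₐ[ℂ] invRing Γ) : Prop :=
  ∀ (d : ℕ) (f : invRing Γ), (f : P2).IsHomogeneous d → ((θ f : invRing Γ) : P2).IsHomogeneous d

/-- `θ` is an anti-Poisson involution: a graded algebra automorphism with `θ ∘ θ = id`
and `θ {f, g} = -{θ f, θ g}` (the bracket condition is stated on underlying polynomials,
for every element `h` of the invariant ring whose underlying polynomial is `{f, g}`). -/
def IsAntiPoissonInv (Γ : Subgroup SL2) (θ : invRing Γ ≃ₐ[ℂ] invRing Γ) : Prop :=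
  IsGradedAut Γ θ ∧ (∀ f, θ (θ f) = f) ∧
    ∀ f g h : invRing Γ, (h : P2) = pb (f : P2) (g : P2) →
      ((θ h : invRing Γ) : P2) = - pb ((θ f : invRing Γ) : P2) ((θ g : invRing Γ) : P2)

/-- `σ` is a graded Poisson automorphism. -/
def IsGradedPoissonAut (Γ : Subgroup SL2) (σ : invRing Γ ≃ₐ[ℂ] invRing Γ) : Prop :=
  IsGradedAut Γ σ ∧
    ∀ f g h : invRing Γ, (h : P2) = pb (f : P2) (g : P2) →
      ((σ h : invRing Γ) : P2) = pb ((σ f : invRing Γ) : P2) ((σ g : invRing Γ) : P2)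

/-- `θ'` is conjugate to `θ` by a graded Poisson automorphism: `θ' = σ ∘ θ ∘ σ⁻¹`. -/
def APIConj (Γ : Subgroup SL2) (θ θ' : invRing Γ ≃ₐ[ℂ] invRing Γ) : Prop :=
  ∃ σ : invRing Γ ≃ₐ[ℂ] invRing Γ, IsGradedPoissonAut Γ σ ∧ ∀ f, θ' f = σ (θ (σ.symm f))

/-- `θ` takes the values `x' y' z'` on `x y z`. -/
def Vals (Γ : Subgroup SL2) (θ : invRing Γ ≃ₐ[ℂ] invRing Γ)
    (x y z x' y' z' : invRing Γ) : Prop :=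
  θ x = x' ∧ θ y = y' ∧ θ z = z'

/-- The ideal `J_θ` generated by all `θ f - f`. -/
def Jideal (Γ : Subgroup SL2) (θ : invRing Γ ≃ₐ[ℂ] invRing Γ) : Ideal (invRing Γ) :=
  Ideal.span (Set.range fun f => θ f - f)

/-! ### Linear substitutions and the bracket -/

theorem mem_inv {Γ : Subgroup SL2} {f : P2} :
    f ∈ invRing Γ ↔ ∀ g ∈ Γ, matSub (g : Matrix (Fin 2) (Fin 2) ℂ) f = f := by
  simp only [invRing, Algebra.mem_iInf, AlgHom.mem_equalizer, slAct, AlgHom.id_apply]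
  constructor
  · intro h g hg
    simpa using h ⟨g⁻¹, inv_mem hg⟩
  · intro h g
    exact h _ (inv_mem g.2)

theorem matSub_comp (a b : Matrix (Fin 2) (Fin 2) ℂ) (f : P2) :
    matSub a (matSub b f) = matSub (b * a) f := by
  suffices h : (matSub a).comp (matSub b) = matSub (b * a) from congrArg (fun φ => φ f) h
  ext1 i
  simp [matSub, Matrix.mul_apply, Fin.sum_univ_two]
  ring

theorem matSub_one (f : P2) : matSub 1 f = f := by
  suffices h : matSub 1 = AlgHom.id ℂ P2 from congrArg (fun φ => φ f) h
  ext1 i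
  fin_cases i <;> simp [matSub, Fin.sum_univ_two]

theorem matSub_hom (m : Matrix (Fin 2) (Fin 2) ℂ) {f : P2} {d : ℕ} (hf : f.IsHomogeneous d) :
    (matSub m f).IsHomogeneous d := by
  have hlin : ∀ i, (∑ j, MvPolynomial.C (m i j) * X j : P2).IsHomogeneous 1 := fun i =>
    IsHomogeneous.sum _ _ _ fun j _ => (isHomogeneous_X ℂ j).C_mul (m i j)
  have := hf.aeval (fun i => ∑ j, MvPolynomial.C (m i j) * X j) hlin
  rwa [one_mul] at this

theorem pderiv_matSub (m : Matrix (Fin 2) (Fin 2) ℂ) (i : Fin 2) (f : P2) :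
    pderiv i (matSub m f) =
      C (m 0 i) * matSub m (pderiv 0 f) + C (m 1 i) * matSub m (pderiv 1 f) := by
  induction f using MvPolynomial.induction_on with
  | C a => simp [matSub]
  | add p q hp hq => simp only [map_add, hp, hq]; ring
  | mul_X p j hp =>
    rw [map_mul, Derivation.leibniz, hp]
    have hX : pderiv i (matSub m (X j)) = C (m j i) := by
      fin_cases i <;> simp [matSub, Fin.sum_univ_two, pderiv_X]
    rw [hX]
    fin_cases j <;> simp [pderiv_X, Derivation.leibniz] <;> ring

/-- Linear substitutions scale the bracket by their determinant. -/
theorem pb_matSub (m : Matrix (Fin 2) (Fin 2) ℂ) (f g : P2) :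
    pb (matSub m f) (matSub m g) = C m.det * matSub m (pb f g) := by
  simp only [pb, pderiv_matSub, Matrix.det_fin_two, map_sub, map_mul]
  ring

theorem coeff_diag (a b : ℂ) (f : P2) (d : Fin 2 →₀ ℕ) :
    coeff d (matSub !![a, 0; 0, b] f) = a ^ d 0 * b ^ d 1 * coeff d f := by
  induction f using MvPolynomial.induction_on' with
  | monomial e c =>
    have : matSub !![a, 0; 0, b] (monomial e c) = monomial e (a ^ e 0 * b ^ e 1 * c) := by
      rw [matSub, aeval_monomial, Finsupp.prod_fintype _ _ (by simp), monomial_eq,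
        Finsupp.prod_fintype _ _ (by simp)]
      simp [Fin.sum_univ_two, Fin.prod_univ_two, mul_pow]
      ring
    rw [this, coeff_monomial, coeff_monomial]
    split_ifs with h
    · rw [h]
    · simp
  | add p q hp hq => simp only [map_add, coeff_add, hp, hq]; ring

/-- The monomials `u ^ a v ^ b` are eigenvectors of `{·, uv}`, with eigenvalue `a - b`. -/
theorem coeff_pb (f : P2) (d : Fin 2 →₀ ℕ) :
    coeff d (pb f (X 0 * X 1)) = ((d 0 : ℂ) - d 1) * coeff d f := by
  have hpb : ∀ f : P2, pb f (X 0 * X 1) = X 0 * pderiv 0 f - X 1 * pderiv 1 f := by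
    intro f; simp [pb, pderiv_X]; ring
  rw [hpb]
  induction f using MvPolynomial.induction_on' with
  | monomial e c =>
    simp only [X_mul_pderiv_monomial, coeff_sub, coeff_smul, coeff_monomial]
    split_ifs with h
    · subst h; simp; ring
    · simp
  | add p q hp hq =>
    simp only [map_add, coeff_add, mul_add, coeff_sub] at *
    linear_combination hp + hq

/-! ### Automorphisms induced by matrices, and conjugation -/

/-- The automorphism of `ℂ[u,v]^Γ` induced by an invertible matrix `m` (with inverse `m'`)
normalizing `Γ`; the normalizing condition is asked of both `m` and `m'`. -/
def linAut (Γ : Subgroup SL2) (m m' : Matrix (Fin 2) (Fin 2) ℂ) (h : m * m' = 1)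
    (hm : ∀ g ∈ Γ, ∃ g' ∈ Γ, m * (g : Matrix (Fin 2) (Fin 2) ℂ) = (g' : Matrix _ _ ℂ) * m)
    (hm' : ∀ g ∈ Γ, ∃ g' ∈ Γ, m' * (g : Matrix (Fin 2) (Fin 2) ℂ) = (g' : Matrix _ _ ℂ) * m') :
    invRing Γ ≃ₐ[ℂ] invRing Γ :=
  have key : ∀ k : Matrix (Fin 2) (Fin 2) ℂ,
      (∀ g ∈ Γ, ∃ g' ∈ Γ, k * (g : Matrix (Fin 2) (Fin 2) ℂ) = (g' : Matrix _ _ ℂ) * k) →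
      ∀ f : invRing Γ, matSub k (f : P2) ∈ invRing Γ := fun k hk f => by
    rw [mem_inv]
    intro g hg
    obtain ⟨g', hg', e⟩ := hk g hg
    rw [matSub_comp, e, ← matSub_comp, mem_inv.1 f.2 g' hg']
  AlgEquiv.ofAlgHom
    (((matSub m).comp (invRing Γ).val).codRestrict (invRing Γ) (key m hm))
    (((matSub m').comp (invRing Γ).val).codRestrict (invRing Γ) (key m' hm'))
    (by
      ext1 f
      apply Subtype.ext
      change matSub m (matSub m' (f : P2)) = f
      rw [matSub_comp, mul_eq_one_comm.1 h, matSub_one])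
    (by
      ext1 f
      apply Subtype.ext
      change matSub m' (matSub m (f : P2)) = f
      rw [matSub_comp, h, matSub_one])

section LinAut

variable {Γ : Subgroup SL2} {m m' : Matrix (Fin 2) (Fin 2) ℂ} (h : m * m' = 1)
    (hm : ∀ g ∈ Γ, ∃ g' ∈ Γ, m * (g : Matrix (Fin 2) (Fin 2) ℂ) = (g' : Matrix _ _ ℂ) * m)
    (hm' : ∀ g ∈ Γ, ∃ g' ∈ Γ, m' * (g : Matrix (Fin 2) (Fin 2) ℂ) = (g' : Matrix _ _ ℂ) * m')

theorem linAut_coe (f : invRing Γ) : (linAut Γ m m' h hm hm' f : P2) = matSub m f := rfl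

theorem linAut_symm_coe (f : invRing Γ) :
    ((linAut Γ m m' h hm hm').symm f : P2) = matSub m' f := rfl

theorem linAut_graded : IsGradedAut Γ (linAut Γ m m' h hm hm') :=
  fun _ _ hf => matSub_hom m hf

theorem linAut_poisson (hd : m.det = 1) : IsGradedPoissonAut Γ (linAut Γ m m' h hm hm') := by
  refine ⟨linAut_graded h hm hm', fun f g k hk => ?_⟩
  rw [linAut_coe, linAut_coe, linAut_coe, hk, pb_matSub, hd, map_one, one_mul]

theorem linAut_symm_poisson (hd : m.det = 1) :
    IsGradedPoissonAut Γ (linAut Γ m m' h hm hm').symm := by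
  have hd' : m'.det = 1 := by
    have := congrArg Matrix.det h
    rwa [Matrix.det_mul, hd, one_mul, Matrix.det_one] at this
  exact linAut_poisson (mul_eq_one_comm.1 h) hm' hm hd'

/-- A matrix of determinant `-1` reverses the sign of the bracket. -/
theorem linAut_anti (hd : m.det = -1)
    (hinv : ∀ f, linAut Γ m m' h hm hm' (linAut Γ m m' h hm hm' f) = f) :
    IsAntiPoissonInv Γ (linAut Γ m m' h hm hm') := by
  refine ⟨linAut_graded h hm hm', hinv, fun f g k hk => ?_⟩
  rw [linAut_coe, linAut_coe, linAut_coe, hk, pb_matSub, hd, map_neg, map_one, neg_one_mul, neg_neg]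

end LinAut

/-- If `θ` is conjugate to `σ⁻¹ ∘ θ' ∘ σ`, it is conjugate to `θ'`. -/
theorem conj_trans {Γ : Subgroup SL2} {θ θ' σ : invRing Γ ≃ₐ[ℂ] invRing Γ}
    (hσ : IsGradedPoissonAut Γ σ) (h : APIConj Γ θ (σ.trans (θ'.trans σ.symm))) :
    APIConj Γ θ θ' := by
  obtain ⟨τ, hτ, e⟩ := h
  refine ⟨τ.trans σ, ⟨fun d f hf => hσ.1 d _ (hτ.1 d f hf), fun f g k hk =>
    hσ.2 _ _ _ (hτ.2 f g k hk)⟩, fun f => ?_⟩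
  have := congrArg σ (e (σ.symm f))
  simpa using this

theorem anti_conj {Γ : Subgroup SL2} {θ σ : invRing Γ ≃ₐ[ℂ] invRing Γ}
    (hσ : IsGradedPoissonAut Γ σ) (hσ' : IsGradedPoissonAut Γ σ.symm)
    (hθ : IsAntiPoissonInv Γ θ) :
    IsAntiPoissonInv Γ (σ.trans (θ.trans σ.symm)) := by
  refine ⟨fun d f hf => hσ'.1 d _ (hθ.1 d _ (hσ.1 d f hf)), fun f => ?_, fun f g k hk => ?_⟩
  · simp [hθ.2.1]
  · have h1 := hθ.2.2 _ _ _ (hσ.2 f g k hk)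
    have h2 := hσ'.2 (θ (σ f)) (θ (σ g)) (-θ (σ k)) (by simp [h1])
    simp only [map_neg] at h2
    simp only [AlgEquiv.trans_apply]
    rw [← h2]; simp

/-! ### The cyclic group -/

section Cyclic

variable {n : ℕ} {Γ : Subgroup SL2} (hΓ : ∀ g : SL2, g ∈ Γ ↔ ∃ ε : ℂ, ε ^ (n + 1) = 1 ∧
      (g : Matrix (Fin 2) (Fin 2) ℂ) = !![ε, 0; 0, ε⁻¹])
include hΓ

theorem norm_diag (a b : ℂ) : ∀ g ∈ Γ, ∃ g' ∈ Γ,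
    !![a, 0; 0, b] * (g : Matrix (Fin 2) (Fin 2) ℂ) = (g' : Matrix _ _ ℂ) * !![a, 0; 0, b] := by
  intro g hg
  refine ⟨g, hg, ?_⟩
  obtain ⟨ε, -, e⟩ := (hΓ g).1 hg
  rw [e]; simp [mul_comm]

theorem norm_swap : ∀ g ∈ Γ, ∃ g' ∈ Γ,
    !![0, 1; 1, 0] * (g : Matrix (Fin 2) (Fin 2) ℂ) = (g' : Matrix _ _ ℂ) * !![0, 1; 1, 0] := by
  intro g hg
  refine ⟨g⁻¹, inv_mem hg, ?_⟩
  obtain ⟨ε, -, e⟩ := (hΓ g).1 hg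
  rw [Matrix.SpecialLinearGroup.coe_inv, e]; simp [Matrix.adjugate_fin_two_of]

/-- For `n = 1` the group is `{±1}`, which is central. -/
theorem norm_any (hn : n = 1) (m : Matrix (Fin 2) (Fin 2) ℂ) : ∀ g ∈ Γ, ∃ g' ∈ Γ,
    m * (g : Matrix (Fin 2) (Fin 2) ℂ) = (g' : Matrix _ _ ℂ) * m := by
  intro g hg
  refine ⟨g, hg, ?_⟩
  obtain ⟨ε, h1, e⟩ := (hΓ g).1 hg
  subst hn
  have h2 : ε⁻¹ = ε := by
    have : ε ≠ 0 := by rintro rfl; simp at h1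
    field_simp; linear_combination -h1
  rw [e, h2, Matrix.eta_fin_two m]; simp [mul_comm]

/-- Monomials `u ^ a v ^ b` occurring in an invariant have `a ≡ b` modulo `n + 1`. -/
theorem support_mod {f : P2} (hf : f ∈ invRing Γ) {d : Fin 2 →₀ ℕ} (hd : coeff d f ≠ 0) :
    d 0 ≡ d 1 [MOD n + 1] := by
  have hp := Complex.isPrimitiveRoot_exp (n + 1) (by omega)
  set ε := Complex.exp (2 * Real.pi * Complex.I / ((n + 1 : ℕ) : ℂ)) with hε
  have h0 : ε ≠ 0 := Complex.exp_ne_zero _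
  have hg := mem_inv.1 hf ⟨!![ε, 0; 0, ε⁻¹], by simp [Matrix.det_fin_two_of, h0]⟩
    ((hΓ _).2 ⟨ε, hp.pow_eq_one, rfl⟩)
  have h1 := congrArg (coeff d) hg
  simp only [coeff_diag] at h1
  have h2 : ε ^ d 0 * ε⁻¹ ^ d 1 = 1 := mul_right_cancel₀ hd (by rw [h1, one_mul])
  have h3 : ε ^ d 0 = ε ^ d 1 := by
    rw [inv_pow] at h2
    field_simp at h2
    exact h2
  rw [hp.eq_orderOf]
  exact (IsOfFinOrder.pow_eq_pow_iff_modEq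
    (isOfFinOrder_iff_pow_eq_one.2 ⟨n + 1, by omega, hp.pow_eq_one⟩)).1 h3

theorem adjoin_xyz (x y z : invRing Γ) (hx : (x : P2) = X 0 ^ (n + 1))
    (hy : (y : P2) = X 1 ^ (n + 1)) (hz : (z : P2) = X 0 * X 1) :
    Algebra.adjoin ℂ {x, y, z} = ⊤ := by
  rw [eq_top_iff]
  rintro f -
  suffices hf : (f : P2) ∈ (Algebra.adjoin ℂ {x, y, z}).map (invRing Γ).val by
    obtain ⟨f', h1, h2⟩ := hf
    exact Subtype.ext h2 ▸ h1
  have xm : x ∈ Algebra.adjoin ℂ {x, y, z} := Algebra.subset_adjoin (by simp)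
  have ym : y ∈ Algebra.adjoin ℂ {x, y, z} := Algebra.subset_adjoin (by simp)
  have zm : z ∈ Algebra.adjoin ℂ {x, y, z} := Algebra.subset_adjoin (by simp)
  rw [(f : P2).as_sum]
  refine Subalgebra.sum_mem _ fun d hd => ?_
  have hmod := support_mod hΓ f.2 (mem_support_iff.1 hd)
  have hmon : monomial d (coeff d (f : P2)) = coeff d (f : P2) • (X 0 ^ d 0 * X 1 ^ d 1 : P2) := by
    rw [monomial_eq, Finsupp.prod_fintype _ _ (by simp), Fin.prod_univ_two, smul_eq_C_mul]
  rw [hmon]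
  refine Subalgebra.smul_mem _ ?_ _
  rcases le_total (d 0) (d 1) with hle | hle
  · obtain ⟨k, hk⟩ := (Nat.modEq_iff_dvd' hle).1 hmod
    refine ⟨z ^ d 0 * y ^ k, mul_mem (pow_mem zm _) (pow_mem ym _), ?_⟩
    have : d 1 = d 0 + (n + 1) * k := by omega
    simp [hz, hy, this, mul_pow, pow_add, pow_mul, mul_assoc]
  · obtain ⟨k, hk⟩ := (Nat.modEq_iff_dvd' hle).1 hmod.symm
    refine ⟨z ^ d 1 * x ^ k, mul_mem (pow_mem zm _) (pow_mem xm _), ?_⟩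
    have : d 0 = d 1 + (n + 1) * k := by omega
    simp [hz, hx, this, mul_pow, pow_add, pow_mul]
    ring

theorem aut_ext {x y z : invRing Γ} (hx : (x : P2) = X 0 ^ (n + 1))
    (hy : (y : P2) = X 1 ^ (n + 1)) (hz : (z : P2) = X 0 * X 1)
    {φ ψ : invRing Γ ≃ₐ[ℂ] invRing Γ} (h1 : φ x = ψ x) (h2 : φ y = ψ y) (h3 : φ z = ψ z)
    (f : invRing Γ) : φ f = ψ f := by
  have : (φ : invRing Γ →ₐ[ℂ] invRing Γ) = ψ :=
    AlgHom.ext_of_adjoin_eq_top (adjoin_xyz hΓ x y z hx hy hz) (by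
      rintro w (rfl | rfl | rfl)
      exacts [h1, h2, h3])
  exact congrArg (fun φ => φ f) this

/-- The intertwining relation `θ' ∘ σ = σ ∘ θ` need only be checked on `x`, `y`, `z`. -/
theorem conj_of_gens {x y z : invRing Γ} (hx : (x : P2) = X 0 ^ (n + 1))
    (hy : (y : P2) = X 1 ^ (n + 1)) (hz : (z : P2) = X 0 * X 1)
    {θ θ' σ : invRing Γ ≃ₐ[ℂ] invRing Γ} (hσ : IsGradedPoissonAut Γ σ)
    (h1 : θ' (σ x) = σ (θ x)) (h2 : θ' (σ y) = σ (θ y)) (h3 : θ' (σ z) = σ (θ z)) :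
    APIConj Γ θ θ' := by
  refine ⟨σ, hσ, fun f => ?_⟩
  have := aut_ext hΓ hx hy hz (φ := σ.trans θ') (ψ := θ.trans σ) h1 h2 h3 (σ.symm f)
  simpa using this

end Cyclic

/-! ### Eigenvectors of the bracket with `uv`, and quadratic forms -/

theorem eigen_pos {N : ℕ} {f : P2} (hf : f.IsHomogeneous N)
    (h : pb f (X 0 * X 1) = C (N : ℂ) * f) : ∃ α : ℂ, f = C α * X 0 ^ N := by
  refine ⟨coeff (Finsupp.single 0 N) f, ?_⟩
  ext d
  rw [coeff_C_mul, coeff_X_pow]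
  split_ifs with hd
  · rw [hd, mul_one]
  rw [mul_zero]
  by_contra hc
  have h1 : d.degree = N := by
    by_contra h'; exact hc (hf.coeff_eq_zero h')
  have h2 := congrArg (coeff d) h
  rw [coeff_pb, coeff_C_mul] at h2
  have h3 := mul_right_cancel₀ hc h2
  rw [Finsupp.degree_eq_sum, Fin.sum_univ_two] at h1
  have h4 : d 0 = N + d 1 := by
    have : (d 0 : ℂ) = N + d 1 := by linear_combination h3
    exact_mod_cast this
  apply hd
  ext i; fin_cases i <;> simp <;> omega

theorem eigen_neg {N : ℕ} {f : P2} (hf : f.IsHomogeneous N)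
    (h : pb f (X 0 * X 1) = - (C (N : ℂ) * f)) : ∃ α : ℂ, f = C α * X 1 ^ N := by
  refine ⟨coeff (Finsupp.single 1 N) f, ?_⟩
  ext d
  rw [coeff_C_mul, coeff_X_pow]
  split_ifs with hd
  · rw [hd, mul_one]
  rw [mul_zero]
  by_contra hc
  have h1 : d.degree = N := by
    by_contra h'; exact hc (hf.coeff_eq_zero h')
  have h2 := congrArg (coeff d) h
  rw [coeff_pb, coeff_neg, coeff_C_mul, ← neg_mul] at h2
  have h3 := mul_right_cancel₀ hc h2
  rw [Finsupp.degree_eq_sum, Fin.sum_univ_two] at h1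
  have h4 : d 1 = N + d 0 := by
    have : (d 1 : ℂ) = N + d 0 := by linear_combination -h3
    exact_mod_cast this
  apply hd
  ext i; fin_cases i <;> simp <;> omega

theorem quad_form {f : P2} (hf : f.IsHomogeneous 2) :
    f = C (coeff (Finsupp.single 0 2) f) * X 0 ^ 2 + C (coeff (Finsupp.single 1 2) f) * X 1 ^ 2
      + C (coeff (Finsupp.single 0 1 + Finsupp.single 1 1) f) * (X 0 * X 1) := by
  have hXX : (X 0 * X 1 : P2) = monomial (Finsupp.single 0 1 + Finsupp.single 1 1) 1 := by
    rw [X, X, monomial_mul, one_mul]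
  ext d
  rw [hXX]
  simp only [coeff_add, coeff_C_mul, coeff_X_pow, coeff_monomial]
  have hiff : ∀ e : Fin 2 →₀ ℕ, e = d ↔ e 0 = d 0 ∧ e 1 = d 1 := fun e => by
    rw [Finsupp.ext_iff, Fin.forall_fin_two]
  simp only [hiff]
  by_cases hd : d.degree = 2
  · rw [Finsupp.degree_eq_sum, Fin.sum_univ_two] at hd
    have : (d 0 = 2 ∧ d 1 = 0) ∨ (d 0 = 0 ∧ d 1 = 2) ∨ (d 0 = 1 ∧ d 1 = 1) := by omega
    rcases this with ⟨h0, h1⟩ | ⟨h0, h1⟩ | ⟨h0, h1⟩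
    · have : d = Finsupp.single 0 2 := by ext i; fin_cases i <;> simp [h0, h1]
      simp [this]
    · have : d = Finsupp.single 1 2 := by ext i; fin_cases i <;> simp [h0, h1]
      simp [this]
    · have : d = Finsupp.single 0 1 + Finsupp.single 1 1 := by ext i; fin_cases i <;> simp [h0, h1]
      simp [this]
  · rw [hf.coeff_eq_zero hd]
    rw [Finsupp.degree_eq_sum, Fin.sum_univ_two] at hd
    symm
    simp
    rw [if_neg (by omega), if_neg (by omega), if_neg (by omega)]; simp

/-! ### Classification up to conjugation -/

section Classification

variable {n : ℕ} {Γ : Subgroup SL2} (hΓ : ∀ g : SL2, g ∈ Γ ↔ ∃ ε : ℂ, ε ^ (n + 1) = 1 ∧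
      (g : Matrix (Fin 2) (Fin 2) ℂ) = !![ε, 0; 0, ε⁻¹])
  {x y z : invRing Γ} (hx : (x : P2) = X 0 ^ (n + 1))
    (hy : (y : P2) = X 1 ^ (n + 1)) (hz : (z : P2) = X 0 * X 1)

theorem matSub_X0 (m : Matrix (Fin 2) (Fin 2) ℂ) :
    matSub m (X 0) = C (m 0 0) * X 0 + C (m 0 1) * X 1 := by
  simp [matSub, Fin.sum_univ_two]

theorem matSub_X1 (m : Matrix (Fin 2) (Fin 2) ℂ) :
    matSub m (X 1) = C (m 1 0) * X 0 + C (m 1 1) * X 1 := by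
  simp [matSub, Fin.sum_univ_two]

include hx in
theorem x_ne : x ≠ 0 := by
  intro h; rw [h] at hx; exact pow_ne_zero _ (X_ne_zero 0) hx.symm

include hy in
theorem y_ne : y ≠ 0 := by
  intro h; rw [h] at hy; exact pow_ne_zero _ (X_ne_zero 1) hy.symm

include hz in
theorem z_ne : z ≠ 0 := by
  intro h; rw [h] at hz; exact mul_ne_zero (X_ne_zero 0) (X_ne_zero 1) hz.symm

include hx hy hz in
theorem rel : x * y = z ^ (n + 1) := by
  apply Subtype.ext; simp [hx, hy, hz, mul_pow]

theorem smul_cancel {a b : ℂ} {w : invRing Γ} (hw : w ≠ 0) (h : a • w = b • w) : a = b := by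
  have h1 := congrArg (Subtype.val) h
  have hw' : (w : P2) ≠ 0 := fun h => hw (Subtype.ext h)
  simp only [SetLike.val_smul, smul_eq_C_mul] at h1
  exact C_injective _ _ (mul_right_cancel₀ hw' h1)

theorem pb_x : pb (X 0 ^ (n + 1)) (X 0 * X 1) = C ((n + 1 : ℕ) : ℂ) * X 0 ^ (n + 1) := by
  simp [pb, pderiv_X, Derivation.leibniz_pow]; ring

theorem pb_y : pb (X 1 ^ (n + 1)) (X 0 * X 1) = -(C ((n + 1 : ℕ) : ℂ) * X 1 ^ (n + 1)) := by
  simp [pb, pderiv_X, Derivation.leibniz_pow]; ring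

theorem pb_C_mul_right (f g : P2) (c : ℂ) : pb f (C c * g) = C c * pb f g := by
  simp [pb, Derivation.leibniz]; ring

include hx hy hz in
/-- An anti-Poisson involution `θ` with `θ z = c z` has `c = ±1`. Since `{x, z} = (n+1) x` and
`{y, z} = -(n+1) y`, the images `θ x`, `θ y` are eigenvectors of `{·, z}` in degree `n + 1` with
eigenvalues `-c(n+1)`, `c(n+1)`, hence multiples of `x` or `y`; the relation `x y = z ^ (n + 1)`
and `θ ∘ θ = id` restrict the scalars. -/
theorem vals_of_z (hodd : Odd n) {θ : invRing Γ ≃ₐ[ℂ] invRing Γ} (hθ : IsAntiPoissonInv Γ θ)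
    {c : ℂ} (hc : θ z = c • z) :
    (c = 1 ∧ ∃ α β : ℂ, α * β = 1 ∧ θ x = α • y ∧ θ y = β • x) ∨
    (c = -1 ∧ ∃ α : ℂ, (α = 1 ∨ α = -1) ∧ θ x = α • x ∧ θ y = α • y) := by
  have hxh : (x : P2).IsHomogeneous (n + 1) := hx ▸ isHomogeneous_X_pow 0 (n + 1)
  have hyh : (y : P2).IsHomogeneous (n + 1) := hy ▸ isHomogeneous_X_pow 1 (n + 1)
  have hc2 : c * c = 1 := by
    have h := hθ.2.1 z
    rw [hc, map_smul, hc, smul_smul] at h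
    exact smul_cancel (z_ne hz) (h.trans (one_smul _ _).symm)
  have key : ∀ (w : invRing Γ) (e : ℂ), pb (w : P2) (X 0 * X 1) = C e * (w : P2) →
      pb (θ w : P2) (X 0 * X 1) = - C (c * e) * (θ w : P2) := by
    intro w e hw
    have h := hθ.2.2 w z (e • w) (by rw [hz, hw, SetLike.val_smul, smul_eq_C_mul])
    rw [map_smul, hc, SetLike.val_smul, SetLike.val_smul, smul_eq_C_mul, smul_eq_C_mul, hz,
      pb_C_mul_right] at h
    have h' := congrArg (fun t => C c * t) h
    have hC : (C c * C c : P2) = 1 := by rw [← C_mul, hc2, C_1]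
    rw [C_mul]
    linear_combination h' - pb (θ w : P2) (X 0 * X 1) * hC
  have kx := key x ((n + 1 : ℕ) : ℂ) (by rw [hx, pb_x])
  have ky := key y (-((n + 1 : ℕ) : ℂ)) (by rw [hy, pb_y, C_neg, neg_mul])
  have hrel : θ x * θ y = θ z ^ (n + 1) := by rw [← map_mul, rel hx hy hz, map_pow]
  have hne : x * y ≠ 0 := mul_ne_zero (x_ne hx) (y_ne hy)
  rcases mul_self_eq_one_iff.1 hc2 with rfl | rfl
  · left
    refine ⟨rfl, ?_⟩
    obtain ⟨α, hα⟩ := eigen_neg (hθ.1 _ x hxh) (by rw [kx, one_mul, neg_mul])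
    obtain ⟨β, hβ⟩ := eigen_pos (hθ.1 _ y hyh) (by rw [ky, one_mul, C_neg, neg_neg])
    have hα' : θ x = α • y := Subtype.ext (by rw [hα, SetLike.val_smul, smul_eq_C_mul, hy])
    have hβ' : θ y = β • x := Subtype.ext (by rw [hβ, SetLike.val_smul, smul_eq_C_mul, hx])
    refine ⟨α, β, ?_, hα', hβ'⟩
    rw [hα', hβ', hc, one_smul, ← rel hx hy hz, smul_mul_smul_comm, mul_comm y x] at hrel
    exact smul_cancel hne (hrel.trans (one_smul _ _).symm)
  · right
    refine ⟨rfl, ?_⟩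
    obtain ⟨α, hα⟩ := eigen_pos (hθ.1 _ x hxh) (by rw [kx, neg_one_mul, C_neg, neg_neg])
    obtain ⟨β, hβ⟩ := eigen_neg (hθ.1 _ y hyh) (by rw [ky, neg_one_mul, neg_neg, neg_mul])
    have hα' : θ x = α • x := Subtype.ext (by rw [hα, SetLike.val_smul, smul_eq_C_mul, hx])
    have hβ' : θ y = β • y := Subtype.ext (by rw [hβ, SetLike.val_smul, smul_eq_C_mul, hy])
    have hαβ : α * β = 1 := by
      have hz' : (-z) ^ (n + 1) = z ^ (n + 1) := hodd.add_one.neg_pow z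
      rw [hα', hβ', hc, neg_one_smul, hz', ← rel hx hy hz,
        smul_mul_smul_comm] at hrel
      exact smul_cancel hne (hrel.trans (one_smul _ _).symm)
    have hα2 : α * α = 1 := by
      have h := hθ.2.1 x
      rw [hα', map_smul, hα', smul_smul] at h
      exact smul_cancel (x_ne hx) (h.trans (one_smul _ _).symm)
    have hβα : β = α := by linear_combination α * hαβ - β * hα2
    subst hβα
    exact ⟨β, mul_self_eq_one_iff.1 hα2, hα', hβ'⟩

theorem refl_poisson : IsGradedPoissonAut Γ AlgEquiv.refl := ⟨fun _ _ h => h, fun _ _ _ h => h⟩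

include hΓ hx hy hz in
/-- The classification for involutions preserving the line spanned by `z`. -/
theorem core (hodd : Odd n) {θ₁ θ₂ θ₃ θ : invRing Γ ≃ₐ[ℂ] invRing Γ}
    (h₁ : Vals Γ θ₁ x y z y x z) (h₂ : Vals Γ θ₂ x y z x y (-z))
    (h₃ : Vals Γ θ₃ x y z (-x) (-y) (-z)) (hθ : IsAntiPoissonInv Γ θ)
    {c : ℂ} (hc : θ z = c • z) :
    APIConj Γ θ₁ θ ∨ APIConj Γ θ₂ θ ∨ APIConj Γ θ₃ θ := by
  rcases vals_of_z hx hy hz hodd hθ hc with ⟨rfl, α, β, hαβ, ex, ey⟩ | ⟨rfl, α, hα, ex, ey⟩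
  · left
    -- rescale `u ↦ s u`, `v ↦ s⁻¹ v` with `s ^ (2 (n + 1)) = β`
    obtain ⟨s, hs⟩ := IsAlgClosed.exists_pow_nat_eq β (n := 2 * (n + 1)) (by omega)
    have hs0 : s ≠ 0 := by
      rintro rfl
      rw [zero_pow (by omega)] at hs
      rw [← hs, mul_zero] at hαβ
      exact zero_ne_one hαβ
    have hp0 : s ^ (n + 1) ≠ 0 := pow_ne_zero _ hs0
    have hs' : s ^ (n + 1) * s ^ (n + 1) = β := by rw [← hs]; ring
    have hm : !![s, 0; 0, s⁻¹] * !![s⁻¹, 0; 0, s] = 1 := by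
      simp [hs0, Matrix.one_fin_two]
    let σ := linAut Γ _ _ hm (norm_diag hΓ s s⁻¹) (norm_diag hΓ s⁻¹ s)
    have sx : σ x = s ^ (n + 1) • x := Subtype.ext (by
      rw [linAut_coe, SetLike.val_smul, smul_eq_C_mul, hx, map_pow, matSub_X0]
      simp [mul_pow])
    have sy : σ y = (s ^ (n + 1))⁻¹ • y := Subtype.ext (by
      rw [linAut_coe, SetLike.val_smul, smul_eq_C_mul, hy, map_pow, matSub_X1]
      simp [mul_pow, ← C_pow])
    have sz : σ z = z := Subtype.ext (by
      rw [linAut_coe, hz, map_mul, matSub_X0, matSub_X1]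
      have : (C s * C s⁻¹ : P2) = 1 := by rw [← C_mul, mul_inv_cancel₀ hs0, C_1]
      simp
      linear_combination (X 0 * X 1) * this)
    refine conj_of_gens hΓ hx hy hz (σ := σ)
      (linAut_poisson _ _ _ (by simp [Matrix.det_fin_two_of, hs0])) ?_ ?_ ?_
    · rw [h₁.1, sx, sy, map_smul, ex, smul_smul]
      congr 1
      field_simp
      linear_combination hαβ + α * hs'
    · rw [h₁.2.1, sx, sy, map_smul, ey, smul_smul]
      congr 1
      field_simp
      linear_combination -hs'
    · rw [h₁.2.2, sz, hc, one_smul]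
  · right
    rcases hα with rfl | rfl
    · left
      refine conj_of_gens hΓ hx hy hz refl_poisson ?_ ?_ ?_
      · simp [h₂.1, ex]
      · simp [h₂.2.1, ey]
      · simp [h₂.2.2, hc]
    · right
      refine conj_of_gens hΓ hx hy hz refl_poisson ?_ ?_ ?_
      · simp [h₃.1, ex]
      · simp [h₃.2.1, ey]
      · simp [h₃.2.2, hc]

include hx hy hz in
/-- For `n = 1` the degree-two part of the invariant ring is spanned by `x`, `y`, `z`. -/
theorem deg_two_one (hn : n = 1) {f : invRing Γ} (hf : (f : P2).IsHomogeneous 2) :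
    ∃ a b c : ℂ, f = a • x + b • y + c • z := by
  subst hn
  refine ⟨coeff (Finsupp.single 0 2) (f : P2), coeff (Finsupp.single 1 2) (f : P2),
    coeff (Finsupp.single 0 1 + Finsupp.single 1 1) (f : P2), Subtype.ext ((quad_form hf).trans ?_)⟩
  simp only [AddMemClass.coe_add, SetLike.val_smul, smul_eq_C_mul, hx, hy, hz]

include hΓ hz in
/-- For `n > 1` the degree-two part of the invariant ring is spanned by `z`. -/
theorem deg_two_big (hn : 1 < n) {f : invRing Γ} (hf : (f : P2).IsHomogeneous 2) :
    ∃ c : ℂ, f = c • z := by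
  refine ⟨coeff (Finsupp.single 0 1 + Finsupp.single 1 1) (f : P2),
    Subtype.ext ((quad_form hf).trans ?_)⟩
  have h0 : coeff (Finsupp.single 0 2) (f : P2) = 0 := by
    by_contra h
    have := support_mod hΓ f.2 h
    have h2 : 2 ≡ 0 [MOD n + 1] := by simpa using this
    have := Nat.le_of_dvd two_pos (Nat.modEq_zero_iff_dvd.1 h2)
    omega
  have h1 : coeff (Finsupp.single 1 2) (f : P2) = 0 := by
    by_contra h
    have := (support_mod hΓ f.2 h).symm
    have h2 : 2 ≡ 0 [MOD n + 1] := by simpa using this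
    have := Nat.le_of_dvd two_pos (Nat.modEq_zero_iff_dvd.1 h2)
    omega
  rw [h0, h1, SetLike.val_smul, smul_eq_C_mul, hz]
  simp

theorem quad_zero {a b c : ℂ}
    (h : (C a * X 0 ^ 2 + C b * X 1 ^ 2 + C c * (X 0 * X 1) : P2) = 0) : a = 0 ∧ b = 0 ∧ c = 0 := by
  have h1 := congrArg (eval ![1, 0]) h
  have h2 := congrArg (eval ![0, 1]) h
  have h3 := congrArg (eval ![1, 1]) h
  simp at h1 h2 h3
  subst h1 h2
  simpa using h3

/-- A binary quadratic form with nonzero discriminant is, up to a scalar, the image of `u v` under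
a substitution of determinant one. -/
theorem factor {a b c : ℂ} (h : c ^ 2 - 4 * a * b ≠ 0) :
    ∃ (m : Matrix (Fin 2) (Fin 2) ℂ) (t : ℂ), m.det = 1 ∧ t ≠ 0 ∧
      matSub m (X 0 * X 1) = C t * (C a * X 0 ^ 2 + C b * X 1 ^ 2 + C c * (X 0 * X 1)) := by
  have expand : ∀ p q r s : ℂ, matSub !![p, q; r, s] (X 0 * X 1) =
      C (p * r) * X 0 ^ 2 + C (q * s) * X 1 ^ 2 + C (p * s + q * r) * (X 0 * X 1) := by
    intro p q r s
    rw [map_mul, matSub_X0, matSub_X1]; simp; ring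
  have scale : ∀ t : ℂ, (C t * (C a * X 0 ^ 2 + C b * X 1 ^ 2 + C c * (X 0 * X 1)) : P2) =
      C (t * a) * X 0 ^ 2 + C (t * b) * X 1 ^ 2 + C (t * c) * (X 0 * X 1) := by
    intro t; simp; ring
  by_cases ha : a = 0
  · subst ha
    have hc : c ≠ 0 := by rintro rfl; simp at h
    refine ⟨!![1, b / c; 0, 1], c⁻¹, by simp [Matrix.det_fin_two_of], inv_ne_zero hc, ?_⟩
    rw [expand, scale]
    congr 3 <;> field_simp <;> simp
  · obtain ⟨δ, hδ⟩ := IsAlgClosed.exists_pow_nat_eq (c ^ 2 - 4 * a * b) (n := 2) (by omega)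
    have hδ0 : δ ≠ 0 := by rintro rfl; apply h; rw [← hδ]; simp
    refine ⟨!![a / δ, (c - δ) / (2 * δ); 1, (c + δ) / (2 * a)], δ⁻¹, ?_, inv_ne_zero hδ0, ?_⟩
    · rw [Matrix.det_fin_two_of]; field_simp; ring
    · rw [expand, scale]
      congr 3
      · field_simp
      · congr 1
        field_simp; linear_combination -hδ
      · field_simp; ring

include hΓ hx hy hz in
/-- The classification for `n = 1`. Here `θ` may move the line of `z`, but it has an eigenvector
in degree two with nonzero discriminant, and `SL₂(ℂ)` carries `z` to a multiple of it. -/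
theorem core_one (hn : n = 1) {θ₁ θ₂ θ₃ θ : invRing Γ ≃ₐ[ℂ] invRing Γ}
    (h₁ : Vals Γ θ₁ x y z y x z) (h₂ : Vals Γ θ₂ x y z x y (-z))
    (h₃ : Vals Γ θ₃ x y z (-x) (-y) (-z)) (hθ : IsAntiPoissonInv Γ θ) :
    APIConj Γ θ₁ θ ∨ APIConj Γ θ₂ θ ∨ APIConj Γ θ₃ θ := by
  have hxh : (x : P2).IsHomogeneous 2 := by
    rw [hx, hn]; exact isHomogeneous_X_pow 0 2
  have hzh : (z : P2).IsHomogeneous 2 := by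
    rw [hz]; exact (isHomogeneous_X ℂ 0).mul (isHomogeneous_X ℂ 1)
  obtain ⟨a, b, c, hw⟩ := deg_two_one hx hy hz hn (hθ.1 2 z hzh)
  obtain ⟨p, q, r, hp⟩ := deg_two_one hx hy hz hn (hθ.1 2 x hxh)
  have hoddn : Odd n := hn ▸ odd_one
  have hxne := x_ne hx
  have hpb := hθ.2.2 x z ((2 : ℂ) • x) (by
    rw [SetLike.val_smul, smul_eq_C_mul, hz, hx, pb_x, hn]; simp)
  have hdisc : c ^ 2 - 4 * a * b = 1 := by
    rw [map_smul, hp, hw] at hpb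
    simp only [AddMemClass.coe_add, SetLike.val_smul, smul_eq_C_mul, hx, hy, hz, hn] at hpb
    have h0 : (C (2 * p + 2 * (p * c - r * a)) * X 0 ^ 2 + C (2 * q + 2 * (r * b - q * c)) * X 1 ^ 2
        + C (2 * r + 4 * (p * b - q * a)) * (X 0 * X 1) : P2) = 0 := by
      rw [← sub_eq_zero] at hpb
      rw [← hpb]
      have h4 : (C 4 : P2) = 4 := rfl
      have h2 : (C 2 : P2) = 2 := rfl
      simp [pb, pderiv_X, Derivation.leibniz, Derivation.leibniz_pow, h4, h2]
      ring
    obtain ⟨e1, e2, e3⟩ := quad_zero h0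
    have hne : ¬ (p = 0 ∧ q = 0 ∧ r = 0) := by
      rintro ⟨rfl, rfl, rfl⟩
      simp at hp
      exact hxne hp
    -- `ad (θ z)` has eigenvalues `0` and `±2 √disc` in degree two, and `θ x` is an eigenvector
    -- with eigenvalue `2` or `-2`
    by_cases hr : r = 0
    · subst hr
      by_cases hp0 : p = 0
      · subst hp0
        have hq : q ≠ 0 := fun h => hne ⟨rfl, h, rfl⟩
        have hc : c = 1 := by
          apply mul_left_cancel₀ hq; linear_combination -e2 / 2
        have ha : a = 0 := by
          apply mul_left_cancel₀ hq; linear_combination -e3 / 4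
        rw [hc, ha]; ring
      · have hc : c = -1 := by
          apply mul_left_cancel₀ hp0; linear_combination e1 / 2
        subst hc
        have hq : q = 0 := by linear_combination e2 / 4
        subst hq
        have hb : b = 0 := by
          apply mul_left_cancel₀ hp0; linear_combination e3 / 4
        rw [hb]; ring
    · apply mul_left_cancel₀ hr
      grind
  -- one of `z + θ z`, `z - θ z` is a nondegenerate form, as their discriminants add up to `4`
  obtain ⟨e, he, hde⟩ : ∃ e : ℂ, e * e = 1 ∧ (1 + e * c) ^ 2 - 4 * (e * a) * (e * b) ≠ 0 := by
    by_contra! hcon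
    have k1 := hcon 1 (by ring)
    have k2 := hcon (-1) (by ring)
    have : (4 : ℂ) = 0 := by linear_combination k1 + k2 - 2 * hdisc
    norm_num at this
  obtain ⟨m, t, hdet, ht, hmt⟩ := factor hde
  have hm : m * m⁻¹ = 1 := Matrix.mul_nonsing_inv m (by rw [hdet]; exact isUnit_one)
  let σ := linAut Γ m m⁻¹ hm (norm_any hΓ hn _) (norm_any hΓ hn _)
  have hσ : IsGradedPoissonAut Γ σ := linAut_poisson _ _ _ hdet
  have hσ' : IsGradedPoissonAut Γ σ.symm := linAut_symm_poisson _ _ _ hdet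
  have sz : σ z = t • (z + e • θ z) := Subtype.ext (by
    rw [linAut_coe, hz, hmt, hw]
    simp only [AddMemClass.coe_add, SetLike.val_smul, smul_eq_C_mul, hx, hy, hz, hn, C_add, C_mul, C_1]
    ring)
  have hθw : θ (σ z) = e • σ z := by
    rw [sz, map_smul, map_add, map_smul, hθ.2.1, smul_comm e t, smul_add e, smul_smul e e, he,
      one_smul, add_comm]
  have hc' : (σ.trans (θ.trans σ.symm)) z = e • z := by
    simp [hθw]
  exact (core hΓ hx hy hz hoddn h₁ h₂ h₃ (anti_conj hσ hσ' hθ) hc').imp (conj_trans hσ)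
    (Or.imp (conj_trans hσ) (conj_trans hσ))

include hΓ hx hy hz in
/-- `θ₃` acts as `-1` in degree two, so it is not conjugate to anything with a fixed vector there. -/
theorem not_conj_three (hn : 1 ≤ n) {θ θ₃ : invRing Γ ≃ₐ[ℂ] invRing Γ}
    (h₃ : Vals Γ θ₃ x y z (-x) (-y) (-z)) {w : invRing Γ} (hw : (w : P2).IsHomogeneous 2)
    (hw0 : w ≠ 0) (hθw : θ w = w) : ¬ APIConj Γ θ θ₃ := by
  rintro ⟨σ, hσ, hc⟩
  have h := hc (σ w)
  rw [σ.symm_apply_apply, hθw] at h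
  have hneg : θ₃ (σ w) = - σ w := by
    rcases hn.eq_or_lt with h1 | h1
    · obtain ⟨a, b, c, e⟩ := deg_two_one hx hy hz h1.symm (hσ.1 2 w hw)
      rw [e]
      simp [h₃.1, h₃.2.1, h₃.2.2]
      abel
    · obtain ⟨c, e⟩ := deg_two_big hΓ hz h1 (hσ.1 2 w hw)
      rw [e]
      simp [h₃.2.2]
  rw [h] at hneg
  have : σ w = 0 := by
    by_contra h0
    have := smul_cancel h0 (a := 1) (b := -1) (by rw [one_smul, neg_one_smul, ← hneg])
    norm_num at this
  exact hw0 (σ.injective (by rw [this, map_zero]))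

end Classification

/-! ### Existence and (non-)conjugacy of the three involutions -/

section Models

variable {n : ℕ} {Γ : Subgroup SL2} (hΓ : ∀ g : SL2, g ∈ Γ ↔ ∃ ε : ℂ, ε ^ (n + 1) = 1 ∧
      (g : Matrix (Fin 2) (Fin 2) ℂ) = !![ε, 0; 0, ε⁻¹])
  {x y z : invRing Γ}
include hΓ

/-- `θ₁` is induced by the swap of `u` and `v`. -/
theorem exists_one (hx : (x : P2) = X 0 ^ (n + 1))
    (hy : (y : P2) = X 1 ^ (n + 1)) (hz : (z : P2) = X 0 * X 1) :
    ∃ θ₁, IsAntiPoissonInv Γ θ₁ ∧ Vals Γ θ₁ x y z y x z := by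
  have hm : (!![0, 1; 1, 0] * !![0, 1; 1, 0] : Matrix (Fin 2) (Fin 2) ℂ) = 1 := by
    simp [Matrix.one_fin_two]
  refine ⟨linAut Γ _ _ hm (norm_swap hΓ) (norm_swap hΓ), linAut_anti _ _ _ ?_ fun f => ?_, ?_, ?_, ?_⟩
  · simp [Matrix.det_fin_two_of]
  · apply Subtype.ext
    rw [linAut_coe, linAut_coe, matSub_comp, hm, matSub_one]
  all_goals apply Subtype.ext; rw [linAut_coe]
  · simp [hx, hy, matSub_X0]
  · simp [hx, hy, matSub_X1]
  · simp [hz, matSub_X0, matSub_X1, mul_comm]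

/-- `θ₂` is induced by `diag(1, -1)`; it fixes `y` because `n + 1` is even. -/
theorem exists_two (hodd : Odd n) (hx : (x : P2) = X 0 ^ (n + 1))
    (hy : (y : P2) = X 1 ^ (n + 1)) (hz : (z : P2) = X 0 * X 1) :
    ∃ θ₂, IsAntiPoissonInv Γ θ₂ ∧ Vals Γ θ₂ x y z x y (-z) := by
  have hm : (!![1, 0; 0, -1] * !![1, 0; 0, -1] : Matrix (Fin 2) (Fin 2) ℂ) = 1 := by
    simp [Matrix.one_fin_two]
  refine ⟨linAut Γ _ _ hm (norm_diag hΓ 1 (-1)) (norm_diag hΓ 1 (-1)),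
    linAut_anti _ _ _ ?_ fun f => ?_, ?_, ?_, ?_⟩
  · simp [Matrix.det_fin_two_of]
  · apply Subtype.ext
    rw [linAut_coe, linAut_coe, matSub_comp, hm, matSub_one]
  all_goals apply Subtype.ext; rw [linAut_coe]
  · simp [hx, matSub_X0]
  · simp [hy, matSub_X1, hodd.add_one.neg_pow]
  · simp [hz, matSub_X0, matSub_X1]

/-- `θ₃` is induced by `diag(ω, -ω⁻¹)` with `ω ^ (n + 1) = -1`. -/
theorem exists_three (hodd : Odd n) (hx : (x : P2) = X 0 ^ (n + 1))
    (hy : (y : P2) = X 1 ^ (n + 1)) (hz : (z : P2) = X 0 * X 1) :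
    ∃ θ₃, IsAntiPoissonInv Γ θ₃ ∧ Vals Γ θ₃ x y z (-x) (-y) (-z) := by
  obtain ⟨ω, hω⟩ := IsAlgClosed.exists_pow_nat_eq (-1 : ℂ) (n := n + 1) (by omega)
  have hω0 : ω ≠ 0 := by rintro rfl; simp at hω
  have hm : (!![ω, 0; 0, -ω⁻¹] * !![ω⁻¹, 0; 0, -ω] : Matrix (Fin 2) (Fin 2) ℂ) = 1 := by
    simp [Matrix.one_fin_two, hω0]
  let θ := linAut Γ _ _ hm (norm_diag hΓ ω (-ω⁻¹)) (norm_diag hΓ ω⁻¹ (-ω))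
  have ex : θ x = -x := Subtype.ext (by
    rw [linAut_coe, hx, map_pow, matSub_X0]
    simp [mul_pow, ← C_pow, hω, hx])
  have ey : θ y = -y := Subtype.ext (by
    rw [linAut_coe, hy, map_pow, matSub_X1]
    simp [mul_pow, ← C_pow, hω, hy, hodd.add_one.neg_pow])
  have ez : θ z = -z := Subtype.ext (by
    rw [linAut_coe, hz, map_mul, matSub_X0, matSub_X1]
    have : (C ω * C ω⁻¹ : P2) = 1 := by rw [← C_mul, mul_inv_cancel₀ hω0, C_1]
    simp [hz]
    linear_combination (X 0 * X 1) * this)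
  refine ⟨θ, linAut_anti _ _ _ ?_ fun f => ?_, ex, ey, ez⟩
  · simp [Matrix.det_fin_two_of, hω0]
  · refine aut_ext hΓ hx hy hz (φ := θ.trans θ) (ψ := AlgEquiv.refl) ?_ ?_ ?_ f
    · simp [ex]
    · simp [ey]
    · simp [ez]

/-- For `n = 1` a rotation by `π / 4`, which normalizes `{±1}`, conjugates the swap of `u` and `v`
to `diag(1, -1)`. -/
theorem conj_one_two (hn : n = 1) (hx : (x : P2) = X 0 ^ (n + 1))
    (hy : (y : P2) = X 1 ^ (n + 1)) (hz : (z : P2) = X 0 * X 1)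
    {θ₁ θ₂ : invRing Γ ≃ₐ[ℂ] invRing Γ}
    (h₁ : Vals Γ θ₁ x y z y x z) (h₂ : Vals Γ θ₂ x y z x y (-z)) : APIConj Γ θ₁ θ₂ := by
  obtain ⟨r, hr⟩ := IsAlgClosed.exists_pow_nat_eq (1 / 2 : ℂ) (n := 2) (by omega)
  have hm : (!![r, r; -r, r] * !![r, -r; r, r] : Matrix (Fin 2) (Fin 2) ℂ) = 1 := by
    have : r * r + r * r = 1 := by linear_combination 2 * hr
    simp [Matrix.one_fin_two, this]
  let σ := linAut Γ _ _ hm (norm_any hΓ hn _) (norm_any hΓ hn _)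
  have hC : (C r * C r : P2) = C (1 / 2) := by rw [← C_mul, ← hr, sq]
  have hC2 : (C (1 / 2) * 2 : P2) = 1 := by
    rw [show (2 : P2) = C 2 from rfl, ← C_mul]; norm_num
  have sx : σ x = (1 / 2 : ℂ) • (x + y) + z := Subtype.ext (by
    rw [linAut_coe, hx, map_pow, matSub_X0]
    simp only [AddMemClass.coe_add, SetLike.val_smul, smul_eq_C_mul, hx, hy, hz, hn]
    simp only [of_apply, cons_val', cons_val_zero, cons_val_one, cons_val_fin_one]
    linear_combination (X 0 + X 1) ^ 2 * hC + X 0 * X 1 * hC2)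
  have sy : σ y = (1 / 2 : ℂ) • (x + y) - z := Subtype.ext (by
    rw [linAut_coe, hy, map_pow, matSub_X1]
    simp only [AddSubgroupClass.coe_sub, AddMemClass.coe_add, SetLike.val_smul, smul_eq_C_mul,
      hx, hy, hz, hn]
    simp only [of_apply, cons_val', cons_val_zero, cons_val_one, cons_val_fin_one, C_neg]
    linear_combination (X 1 - X 0) ^ 2 * hC - X 0 * X 1 * hC2)
  have sz : σ z = (1 / 2 : ℂ) • (y - x) := Subtype.ext (by
    rw [linAut_coe, hz, map_mul, matSub_X0, matSub_X1]
    simp only [AddSubgroupClass.coe_sub, SetLike.val_smul, smul_eq_C_mul, hx, hy, hn]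
    simp only [of_apply, cons_val', cons_val_zero, cons_val_one, cons_val_fin_one, C_neg]
    linear_combination (X 1 ^ 2 - X 0 ^ 2) * hC)
  refine conj_of_gens hΓ hx hy hz (σ := σ) (linAut_poisson _ _ _ ?_) ?_ ?_ ?_
  · rw [Matrix.det_fin_two_of]; linear_combination 2 * hr
  · rw [h₁.1, sx, sy, map_add, map_smul, map_add, h₂.1, h₂.2.1, h₂.2.2, sub_eq_add_neg]
  · rw [h₁.2.1, sx, sy, map_sub, map_smul, map_add, h₂.1, h₂.2.1, h₂.2.2, sub_neg_eq_add]
  · rw [h₁.2.2, sz, map_smul, map_sub, h₂.1, h₂.2.1]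

theorem not_conj_one_two (hn : 1 < n) (hz : (z : P2) = X 0 * X 1)
    {θ₁ θ₂ : invRing Γ ≃ₐ[ℂ] invRing Γ}
    (h₁ : Vals Γ θ₁ x y z y x z) (h₂ : Vals Γ θ₂ x y z x y (-z)) : ¬ APIConj Γ θ₁ θ₂ := by
  rintro ⟨σ, hσ, hc⟩
  have hzh : (z : P2).IsHomogeneous 2 := by
    rw [hz]; exact (isHomogeneous_X ℂ 0).mul (isHomogeneous_X ℂ 1)
  obtain ⟨c, e⟩ := deg_two_big hΓ hz hn (hσ.1 2 z hzh)
  have h := hc (σ z)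
  rw [σ.symm_apply_apply, h₁.2.2, e, map_smul, h₂.2.2, smul_neg, ← neg_smul] at h
  have hc0 : c = 0 := by
    have := smul_cancel (z_ne hz) h
    linear_combination -this / 2
  rw [hc0, zero_smul] at e
  exact z_ne hz (σ.injective (by rw [e, map_zero]))

/-- In degree `n + 1` the only invariant monomials not Poisson-commuting with `z = u v` are
`u ^ (n + 1)` and `v ^ (n + 1)`, so they span the eigenvectors with nonzero eigenvalue. -/
theorem eigen_inv {f : invRing Γ} (hf : (f : P2).IsHomogeneous (n + 1)) {e : ℂ} (he : e ≠ 0)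
    (hx : (x : P2) = X 0 ^ (n + 1)) (hy : (y : P2) = X 1 ^ (n + 1))
    (h : pb (f : P2) (X 0 * X 1) = C e * (f : P2)) : ∃ a b : ℂ, f = a • x + b • y := by
  refine ⟨coeff (Finsupp.single 0 (n + 1)) (f : P2), coeff (Finsupp.single 1 (n + 1)) (f : P2),
    Subtype.ext ?_⟩
  simp only [AddMemClass.coe_add, SetLike.val_smul, smul_eq_C_mul, hx, hy]
  ext d
  simp only [coeff_add, coeff_C_mul, coeff_X_pow]
  have hne : Finsupp.single (0 : Fin 2) (n + 1) ≠ Finsupp.single 1 (n + 1) := fun h => by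
    simpa using DFunLike.congr_fun h 0
  by_cases h0 : d = Finsupp.single 0 (n + 1)
  · subst h0; rw [if_pos rfl, if_neg hne.symm]; ring
  by_cases h1 : d = Finsupp.single 1 (n + 1)
  · subst h1; rw [if_pos rfl, if_neg hne]; ring
  rw [if_neg (Ne.symm h0), if_neg (Ne.symm h1), mul_zero, mul_zero, add_zero]
  by_contra hc
  have hdeg : d.degree = n + 1 := by
    by_contra h'; exact hc (hf.coeff_eq_zero h')
  rw [Finsupp.degree_eq_sum, Fin.sum_univ_two] at hdeg
  have h2 := congrArg (coeff d) h
  rw [coeff_pb, coeff_C_mul] at h2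
  have h3 := mul_right_cancel₀ hc h2
  have hmod := support_mod hΓ f.2 hc
  have hcases : d 0 = d 1 ∨ (d 0 = n + 1 ∧ d 1 = 0) ∨ (d 0 = 0 ∧ d 1 = n + 1) := by
    by_cases a0 : d 0 = 0
    · right; right; omega
    by_cases a1 : d 1 = 0
    · right; left; omega
    left
    exact hmod.eq_of_lt_of_lt (by omega) (by omega)
  rcases hcases with h4 | ⟨h4, h5⟩ | ⟨h4, h5⟩
  · apply he; rw [← h3, h4, sub_self]
  · apply h0; ext i; fin_cases i <;> simp [h4, h5]
  · apply h1; ext i; fin_cases i <;> simp [h4, h5]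

/-- If `σ` conjugated `θ₂` to `θ₃`, then `σ x` would be an eigenvector of `{·, z}` with nonzero
eigenvalue, so a combination of `x` and `y`, which `θ₃` negates although it has to fix `σ x`. -/
theorem not_conj_two_three (hn : 1 < n) (hx : (x : P2) = X 0 ^ (n + 1))
    (hy : (y : P2) = X 1 ^ (n + 1)) (hz : (z : P2) = X 0 * X 1)
    {θ₂ θ₃ : invRing Γ ≃ₐ[ℂ] invRing Γ} (h₂ : Vals Γ θ₂ x y z x y (-z))
    (h₃ : Vals Γ θ₃ x y z (-x) (-y) (-z)) : ¬ APIConj Γ θ₂ θ₃ := by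
  rintro ⟨σ, hσ, hc⟩
  have hzh : (z : P2).IsHomogeneous 2 := by
    rw [hz]; exact (isHomogeneous_X ℂ 0).mul (isHomogeneous_X ℂ 1)
  have hxh : (x : P2).IsHomogeneous (n + 1) := hx ▸ isHomogeneous_X_pow 0 (n + 1)
  obtain ⟨c, e⟩ := deg_two_big hΓ hz hn (hσ.1 2 z hzh)
  have hc0 : c ≠ 0 := by
    rintro rfl
    rw [zero_smul] at e
    exact z_ne hz (σ.injective (by rw [e, map_zero]))
  have hN : ((n + 1 : ℕ) : ℂ) ≠ 0 := Nat.cast_ne_zero.2 (by omega)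
  have hb := hσ.2 x z (((n + 1 : ℕ) : ℂ) • x) (by
    rw [SetLike.val_smul, smul_eq_C_mul, hz, hx, pb_x])
  rw [map_smul, e, SetLike.val_smul, SetLike.val_smul, smul_eq_C_mul, smul_eq_C_mul, hz,
    pb_C_mul_right] at hb
  obtain ⟨a, b, hab⟩ := eigen_inv hΓ (hσ.1 _ x hxh) (e := c⁻¹ * ((n + 1 : ℕ) : ℂ))
    (mul_ne_zero (inv_ne_zero hc0) hN) hx hy (by
      have hC : (C c⁻¹ * C c : P2) = 1 := by rw [← C_mul, inv_mul_cancel₀ hc0, C_1]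
      rw [C_mul]
      linear_combination -pb (σ x : P2) (X 0 * X 1) * hC - C c⁻¹ * hb)
  have h := hc (σ x)
  rw [σ.symm_apply_apply, h₂.1] at h
  have hneg : θ₃ (σ x) = - σ x := by
    rw [hab]
    simp [h₃.1, h₃.2.1]
    abel
  rw [h] at hneg
  have : σ x = 0 := by
    by_contra h0
    have := smul_cancel h0 (a := 1) (b := -1) (by rw [one_smul, neg_one_smul, ← hneg])
    norm_num at this
  exact x_ne hx (σ.injective (by rw [this, map_zero]))

end Models

/-- classification of anti-Poisson involutions in type `Aₙ`, `n` odd. -/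
theorem stmt0 (n : ℕ) (hn : 1 ≤ n) (hodd : Odd n) (Γ : Subgroup SL2)
    (hΓ : ∀ g : SL2, g ∈ Γ ↔ ∃ ε : ℂ, ε ^ (n + 1) = 1 ∧
      (g : Matrix (Fin 2) (Fin 2) ℂ) = !![ε, 0; 0, ε⁻¹])
    (hx : (X 0 : P2) ^ (n + 1) ∈ invRing Γ)
    (hy : (X 1 : P2) ^ (n + 1) ∈ invRing Γ)
    (hz : (X 0 * X 1 : P2) ∈ invRing Γ) :
    let x : invRing Γ := ⟨(X 0 : P2) ^ (n + 1), hx⟩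
    let y : invRing Γ := ⟨(X 1 : P2) ^ (n + 1), hy⟩
    let z : invRing Γ := ⟨(X 0 * X 1 : P2), hz⟩
    -- (i) existence of the three anti-Poisson involutions
    ((∃ θ₁, IsAntiPoissonInv Γ θ₁ ∧ Vals Γ θ₁ x y z y x z) ∧
     (∃ θ₂, IsAntiPoissonInv Γ θ₂ ∧ Vals Γ θ₂ x y z x y (-z)) ∧
     (∃ θ₃, IsAntiPoissonInv Γ θ₃ ∧ Vals Γ θ₃ x y z (-x) (-y) (-z)) ∧
     -- (ii), (iii)
     ∀ θ₁ θ₂ θ₃ : invRing Γ ≃ₐ[ℂ] invRing Γ,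
       IsAntiPoissonInv Γ θ₁ → Vals Γ θ₁ x y z y x z →
       IsAntiPoissonInv Γ θ₂ → Vals Γ θ₂ x y z x y (-z) →
       IsAntiPoissonInv Γ θ₃ → Vals Γ θ₃ x y z (-x) (-y) (-z) →
         -- (ii) every anti-Poisson involution is conjugate to one of θ₁, θ₂, θ₃
         (∀ θ, IsAntiPoissonInv Γ θ →
            APIConj Γ θ₁ θ ∨ APIConj Γ θ₂ θ ∨ APIConj Γ θ₃ θ) ∧
         -- (iii) for n > 1 they are pairwise non-conjugate
         (1 < n → ¬ APIConj Γ θ₁ θ₂ ∧ ¬ APIConj Γ θ₁ θ₃ ∧ ¬ APIConj Γ θ₂ θ₃) ∧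
         -- for n = 1, θ₁ and θ₂ are conjugate and θ₃ is conjugate to neither
         (n = 1 → APIConj Γ θ₁ θ₂ ∧ ¬ APIConj Γ θ₁ θ₃ ∧ ¬ APIConj Γ θ₂ θ₃)) := by
  intro x y z
  have hx' : (x : P2) = X 0 ^ (n + 1) := rfl
  have hy' : (y : P2) = X 1 ^ (n + 1) := rfl
  have hz' : (z : P2) = X 0 * X 1 := rfl
  have hzh : (z : P2).IsHomogeneous 2 := (isHomogeneous_X ℂ 0).mul (isHomogeneous_X ℂ 1)
  refine ⟨exists_one hΓ hx' hy' hz', exists_two hΓ hodd hx' hy' hz',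
    exists_three hΓ hodd hx' hy' hz', fun θ₁ θ₂ θ₃ _ h₁ _ h₂ _ h₃ => ⟨fun θ hθ => ?_, fun h => ?_,
      fun h => ?_⟩⟩
  · rcases hn.eq_or_lt with h1 | h1
    · exact core_one hΓ hx' hy' hz' h1.symm h₁ h₂ h₃ hθ
    · obtain ⟨c, hc⟩ := deg_two_big hΓ hz' h1 (hθ.1 2 z hzh)
      exact core hΓ hx' hy' hz' hodd h₁ h₂ h₃ hθ hc
  · exact ⟨not_conj_one_two hΓ h hz' h₁ h₂,
      not_conj_three hΓ hx' hy' hz' hn h₃ hzh (z_ne hz') h₁.2.2,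
      not_conj_two_three hΓ h hx' hy' hz' h₂ h₃⟩
  · refine ⟨conj_one_two hΓ h hx' hy' hz' h₁ h₂,
      not_conj_three hΓ hx' hy' hz' hn h₃ hzh (z_ne hz') h₁.2.2,
      not_conj_three hΓ hx' hy' hz' hn h₃ (w := x) ?_ (x_ne hx') h₂.1⟩
    rw [hx', h]
    exact isHomogeneous_X_pow 0 2
end
end

section
/- Let n ≥ 4 be even and Γ = Γ_{D_n}, R = ℂ[u,v]^Γ. Then: (i) there exist anti-Poisson involutions θ₁, θ₂ of R satisfying θ₁(x)=x, θ₁(y)=y, θ₁(z)=−z; θ₂(x)=x, θ₂(y)=x^{(n−2)/2}−y, θ₂(z)=z; (ii) every anti-Poisson involution of R is conjugate by a graded Poisson automorphism to θ₁ or θ₂; (iii) θ₁ and θ₂ are not conjugate. -/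
/-!
Put `n = 2k + 2` and `R = ℂ[u,v]^Γ`. Invariance under the diagonal part of `Γ` and averaging over
the element `u ↦ -v, v ↦ u` show that `R` is spanned, degree by degree, by the orbit sums
`(uv)^b (u^{4kj} + (-1)^b v^{4kj})` (`inv_mem`). Hence `x, y, z` generate `R` (`inv_le_adjoin`), so
automorphisms of `R` are determined by their values on `x, y, z` (`alg_ext`); the component of
degree `4k` is spanned by `x^k, y`, and that of degree `4` by `x` alone when `k ≥ 2`.

(i) The substitutions `u ↦ ζ v, v ↦ ζ⁻¹ u` are involutions of determinant `-1`, so they negate the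
bracket (`pb_sw`). For `ζ = 1` and for `ζ^{4k} = -1` they preserve `R` and induce `θ₁` and `θ₂`.

(ii) Since `{x, y} = 8k z`, a graded (anti-)Poisson automorphism is determined by the scalars in
`x ↦ a x + b y`, `y ↦ c x^k + d y`, and it scales `z` by `±(ad - bc)` (`aut_form`). The relation
`z² = x y² - x^{k+1} y` and the condition `θ² = 1`, evaluated at a few points, leave only `θ₁`, `θ₂`
and, when `n = 4`, two further involutions (`scalars`). For `n = 4` the form `x y (x - y)` is
permuted by `S₃`, acting on its three linear factors, and the last three involutions correspond to
the transpositions. If `θ` is one of the two new ones, then `(θ₂ θ)³ = 1`, so the Poisson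
automorphism `θ₂ θ` conjugates `θ₂` into `θ`.

(iii) A graded Poisson automorphism multiplies `z` by a scalar, so conjugation does not change the
eigenvalue on `z`, which is `-1` for `θ₁` and `1` for `θ₂`.
-/

open MvPolynomial Complex Matrix

noncomputable section

/-! ### The invariant ring and its generators -/

/-- The generator `x = u²v²`. -/
def px : P2 := (X 0 : P2) ^ 2 * (X 1 : P2) ^ 2

/-- The generator `y`, with `n = 2k + 2`. -/
def py (k : ℕ) : P2 := MvPolynomial.C (-(1/4) : ℂ) *
  ((X 0 : P2) ^ (4 * k) - 2 * (X 0 : P2) ^ (2 * k) * (X 1 : P2) ^ (2 * k) + (X 1 : P2) ^ (4 * k))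

/-- The generator `z`, with `n = 2k + 2`. -/
def pz (k : ℕ) : P2 := MvPolynomial.C ((1/4) : ℂ) *
  ((X 0 : P2) * (X 1 : P2) * ((X 0 : P2) ^ (4 * k) - (X 1 : P2) ^ (4 * k)))

/-- `Γ` is the binary dihedral group `Γ_{D_n}` with `n = 2k + 2`. -/
def IsBD (k : ℕ) (Γ : Subgroup SL2) : Prop :=
  ∀ g : SL2, g ∈ Γ ↔ ∃ ε : ℂ, ε ^ (4 * k) = 1 ∧
      ((g : Matrix (Fin 2) (Fin 2) ℂ) = !![ε, 0; 0, ε⁻¹] ∨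
       (g : Matrix (Fin 2) (Fin 2) ℂ) = !![0, ε; -ε⁻¹, 0])

lemma mem_invRing {Γ : Subgroup SL2} {f : P2} : f ∈ invRing Γ ↔ ∀ g ∈ Γ, slAct g f = f := by
  simp [invRing, Algebra.mem_iInf, AlgHom.mem_equalizer]

lemma C4 : (C (1/4) : P2) * 4 = 1 := by
  rw [show (4 : P2) = C 4 from (map_ofNat C 4).symm, ← C_mul]; norm_num

/-- Diagonal substitutions act on each monomial by a scalar. -/
lemma aeval_diag_coeff (c : Fin 2 → ℂ) (f : P2) (e : Fin 2 →₀ ℕ) :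
    coeff e (aeval (fun i => C (c i) * X i) f : P2) = c 0 ^ e 0 * c 1 ^ e 1 * coeff e f := by
  induction f using MvPolynomial.induction_on' with
  | monomial d a =>
    have : (aeval (fun i => C (c i) * X i) (monomial d a) : P2)
        = C (c 0 ^ d 0 * c 1 ^ d 1) * monomial d a := by
      rw [aeval_monomial, Finsupp.prod_fintype _ _ (by simp), monomial_eq (s := d),
        Finsupp.prod_fintype _ _ (by simp)]
      simp [Fin.prod_univ_two, algebraMap_eq]
      ring
    rw [this, coeff_C_mul, coeff_monomial]
    split_ifs with h
    · subst h; rfl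
    · simp
  | add p q hp hq => rw [map_add, coeff_add, coeff_add, hp, hq, mul_add]

/-- The diagonal part of `Γ` forces the exponents `(a, b)` of every monomial `u^a v^b` of an
invariant polynomial to satisfy `a ≡ b mod 4k`. -/
lemma support_modEq {k : ℕ} (hk : 1 ≤ k) {Γ : Subgroup SL2} (hΓ : IsBD k Γ) {f : P2}
    (hf : f ∈ invRing Γ) (e : Fin 2 →₀ ℕ) (he : e ∈ f.support) : e 0 ≡ e 1 [MOD 4 * k] := by
  have hprim := Complex.isPrimitiveRoot_exp (4 * k) (by omega)
  set ζ := Complex.exp (2 * Real.pi * I / ((4 * k : ℕ) : ℂ))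
  have hζ0 : ζ ≠ 0 := Complex.exp_ne_zero _
  let g : SL2 := ⟨!![ζ, 0; 0, ζ⁻¹], by simp [Matrix.det_fin_two, hζ0]⟩
  have hg : g ∈ Γ := (hΓ g).2 ⟨ζ, hprim.pow_eq_one, Or.inl rfl⟩
  have h1 := mem_invRing.1 hf g hg
  have h2 : slAct g = (aeval (fun i => C ((![ζ⁻¹, ζ] : Fin 2 → ℂ) i) * X i) : P2 →ₐ[ℂ] P2) := by
    apply MvPolynomial.algHom_ext
    intro i
    have hinv : ((g⁻¹ : SL2) : Matrix (Fin 2) (Fin 2) ℂ) = !![ζ⁻¹, 0; 0, ζ] := by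
      rw [Matrix.SpecialLinearGroup.coe_inv]
      simp [g, Matrix.adjugate_fin_two]
    fin_cases i <;> simp [slAct, matSub, hinv]
  have h3 := congrArg (coeff e) h1
  rw [h2, aeval_diag_coeff] at h3
  have h4 : coeff e f ≠ 0 := mem_support_iff.1 he
  have h5 : ζ⁻¹ ^ e 0 * ζ ^ e 1 = 1 := by
    apply mul_right_cancel₀ h4
    simpa using h3
  have h6 : ζ ^ e 0 = ζ ^ e 1 := by
    have : ζ ^ e 0 ≠ 0 := pow_ne_zero _ hζ0
    rw [inv_pow] at h5
    field_simp at h5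
    exact h5.symm
  rw [Nat.modEq_iff_dvd, ← hprim.zpow_eq_one_iff_dvd, zpow_sub₀ hζ0, zpow_natCast, zpow_natCast,
    h6, div_self (pow_ne_zero _ hζ0)]

/-- Averaging over the remaining generator `u ↦ -v, v ↦ u` of `Γ`: the invariant polynomials are
spanned by the orbit sums `(uv)^b (u^{4kj} + (-1)^b v^{4kj})`, degree by degree. -/
lemma inv_mem {k : ℕ} (hk : 1 ≤ k) {Γ : Subgroup SL2} (hΓ : IsBD k Γ) {f : P2}
    (hf : f ∈ invRing Γ) (D : ℕ → Prop) (hD : ∀ e ∈ f.support, D (e 0 + e 1))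
    (S : Submodule ℂ P2)
    (hS : ∀ b j, D (2 * b + 4 * k * j) →
      ((X 0 * X 1) ^ b * (X 0 ^ (4 * k * j) + (-1) ^ b * X 1 ^ (4 * k * j)) : P2) ∈ S) :
    f ∈ S := by
  let w : SL2 := ⟨!![0, 1; -1, 0], by simp [Matrix.det_fin_two]⟩
  have hw : w ∈ Γ := (hΓ w).2 ⟨1, by simp, Or.inr (by simp [w])⟩
  have h1 := mem_invRing.1 hf w hw
  have h2 : slAct w = (aeval ![-X 1, X 0] : P2 →ₐ[ℂ] P2) := by
    apply MvPolynomial.algHom_ext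
    intro i
    have hinv : ((w⁻¹ : SL2) : Matrix (Fin 2) (Fin 2) ℂ) = !![0, -1; 1, 0] := by
      rw [Matrix.SpecialLinearGroup.coe_inv]
      simp [w, Matrix.adjugate_fin_two]
    fin_cases i <;> simp [slAct, matSub, hinv]
  have h3 : f = (2⁻¹ : ℂ) • (f + slAct w f) := by
    rw [h1, ← two_smul ℂ f, smul_smul]; norm_num
  have h4 : f + slAct w f = ∑ e ∈ f.support,
      coeff e f • ((X 0 ^ e 0 * X 1 ^ e 1 + (-X 1) ^ e 0 * X 0 ^ e 1 : P2)) := by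
    have hm : ∀ e : Fin 2 →₀ ℕ, monomial e (coeff e f)
        = coeff e f • (X 0 ^ e 0 * X 1 ^ e 1 : P2) := by
      intro e
      rw [monomial_eq, Finsupp.prod_fintype _ _ (by simp), Fin.prod_univ_two, C_mul']
    have hs : f = ∑ e ∈ f.support, coeff e f • (X 0 ^ e 0 * X 1 ^ e 1 : P2) := by
      conv_lhs => rw [f.as_sum]
      exact Finset.sum_congr rfl fun e _ => hm e
    have hs2 : slAct w f
        = ∑ e ∈ f.support, coeff e f • ((-X 1) ^ e 0 * X 0 ^ e 1 : P2) := by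
      conv_lhs => rw [hs]
      rw [map_sum, h2]
      refine Finset.sum_congr rfl fun e _ => ?_
      simp
    calc f + slAct w f = _ := congrArg₂ (· + ·) hs hs2
      _ = _ := by simp only [← Finset.sum_add_distrib, ← smul_add]
  rw [h3, h4]
  refine S.smul_mem _ (S.sum_mem fun e he => S.smul_mem _ ?_)
  have hmod := support_modEq hk hΓ hf e he
  have hDe := hD e he
  generalize e 0 = a at *
  generalize e 1 = b at *
  have hpar : ∀ b j : ℕ, ((-1 : P2)) ^ (b + 4 * k * j) = (-1) ^ b := by
    intro b j
    rw [pow_add, show 4 * k * j = 2 * (2 * k * j) by ring, pow_mul]; simp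
  rcases le_total b a with hab | hab
  · obtain ⟨j, hj⟩ := (Nat.modEq_iff_dvd' hab).1 hmod.symm
    obtain rfl : a = b + 4 * k * j := by omega
    convert hS b j (by convert hDe using 1; ring) using 1
    rw [neg_pow (X 1 : P2), hpar]
    ring
  · obtain ⟨j, hj⟩ := (Nat.modEq_iff_dvd' hab).1 hmod
    obtain rfl : b = a + 4 * k * j := by omega
    have := S.smul_mem ((-1) ^ a : ℂ) (hS a j (by convert hDe using 1; ring))
    convert this using 1
    rw [← C_mul', neg_pow (X 1 : P2), map_pow, map_neg, map_one]
    have h : ((-1 : P2) ^ a) * (-1) ^ a = 1 := by rw [← mul_pow]; simp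
    linear_combination (-(X 0 : P2) ^ a * X 1 ^ (a + 4 * k * j)) * h

lemma sum_eq (k : ℕ) : (X 0 ^ (4 * k) + X 1 ^ (4 * k) : P2) = 2 * px ^ k - 4 * py k := by
  rw [px, py, mul_pow, ← pow_mul, ← pow_mul, C_neg]
  linear_combination (-(X 0 ^ (4 * k) - 2 * X 0 ^ (2 * k) * X 1 ^ (2 * k)
    + X 1 ^ (4 * k)) : P2) * C4

lemma diff_eq (k : ℕ) : (X 0 * X 1 * (X 0 ^ (4 * k) - X 1 ^ (4 * k)) : P2) = 4 * pz k := by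
  rw [pz]
  linear_combination (-(X 0 * X 1 * (X 0 ^ (4 * k) - X 1 ^ (4 * k))) : P2) * C4

/-- `x, y, z` generate the invariant ring. -/
lemma inv_le_adjoin {k : ℕ} (hk : 1 ≤ k) {Γ : Subgroup SL2} (hΓ : IsBD k Γ) :
    invRing Γ ≤ Algebra.adjoin ℂ {px, py k, pz k} := by
  intro f hf
  set A := Algebra.adjoin ℂ {px, py k, pz k} with hA
  have hxA : px ∈ A := Algebra.subset_adjoin (by simp)
  have hyA : py k ∈ A := Algebra.subset_adjoin (by simp)
  have hzA : pz k ∈ A := Algebra.subset_adjoin (by simp)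
  have hnum : ∀ r : ℕ, (r : P2) ∈ A := fun r => natCast_mem A r
  have hp : ((X 0 * X 1) ^ 2 : P2) = px := by rw [px, mul_pow]
  have hp4 : (X 0 ^ (4 * k) * X 1 ^ (4 * k) : P2) = px ^ (2 * k) := by
    rw [px, mul_pow, ← pow_mul, ← pow_mul]; congr 2 <;> ring
  have hsum : (X 0 ^ (4 * k) + X 1 ^ (4 * k) : P2) ∈ A := by
    rw [sum_eq]
    exact A.sub_mem (A.mul_mem (hnum 2) (A.pow_mem hxA k)) (A.mul_mem (hnum 4) hyA)
  -- both families of orbit sums satisfy the recursion `s_{j+2} = s_1 s_{j+1} - (uv)^{4k} s_j`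
  have hrec : ∀ j, (X 0 ^ (4 * k * j) + X 1 ^ (4 * k * j) : P2) ∈ A ∧
      (X 0 * X 1 * (X 0 ^ (4 * k * j) - X 1 ^ (4 * k * j)) : P2) ∈ A := by
    intro j
    induction j using Nat.twoStepInduction with
    | zero => simpa using A.add_mem A.one_mem A.one_mem
    | one =>
      refine ⟨by simpa using hsum, ?_⟩
      rw [mul_one, diff_eq]
      exact A.mul_mem (hnum 4) hzA
    | more j h0 h1 =>
      constructor
      · convert A.sub_mem (A.mul_mem hsum h1.1) (A.mul_mem (A.pow_mem hxA (2 * k)) h0.1) using 1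
        rw [← hp4]; ring
      · convert A.sub_mem (A.mul_mem hsum h1.2) (A.mul_mem (A.pow_mem hxA (2 * k)) h0.2) using 1
        rw [← hp4]; ring
  refine inv_mem hk hΓ hf (fun _ => True) (fun _ _ => trivial) (Subalgebra.toSubmodule A) ?_
  intro b j _
  rw [Subalgebra.mem_toSubmodule]
  rcases Nat.even_or_odd' b with ⟨c, rfl | rfl⟩
  · rw [pow_mul, hp, pow_mul (-1 : P2)]
    simpa using A.mul_mem (A.pow_mem hxA c) (hrec j).1
  · convert A.mul_mem (A.pow_mem hxA c) (hrec j).2 using 1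
    rw [pow_succ, pow_mul, hp, pow_succ (-1 : P2), pow_mul (-1 : P2)]
    simp
    ring

lemma degree_support {f : P2} {d : ℕ} (hf : f.IsHomogeneous d) (e : Fin 2 →₀ ℕ)
    (he : e ∈ f.support) : e 0 + e 1 = d := by
  have h := hf (mem_support_iff.1 he)
  rw [Finsupp.weight_apply, Finsupp.sum_fintype _ _ (by simp)] at h
  simpa [Fin.sum_univ_two] using h

lemma deg_four {k : ℕ} (hk : 2 ≤ k) {Γ : Subgroup SL2} (hΓ : IsBD k Γ) {f : P2}
    (hf : f ∈ invRing Γ) (hd : f.IsHomogeneous 4) : ∃ a : ℂ, f = a • px := by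
  have : f ∈ Submodule.span ℂ {px} := by
    refine inv_mem (by omega) hΓ hf (fun d => d = 4) (degree_support hd) _ ?_
    intro b j h
    obtain rfl : j = 0 := by
      by_contra hj
      have : 2 * 1 ≤ k * j := Nat.mul_le_mul hk (by omega)
      nlinarith
    obtain rfl : b = 2 := by omega
    rw [Submodule.mem_span_singleton]
    refine ⟨2, ?_⟩
    rw [px, ← C_mul', map_ofNat]
    ring
  obtain ⟨a, ha⟩ := Submodule.mem_span_singleton.1 this
  exact ⟨a, ha.symm⟩

lemma deg_4k {k : ℕ} (hk : 1 ≤ k) {Γ : Subgroup SL2} (hΓ : IsBD k Γ) {f : P2}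
    (hf : f ∈ invRing Γ) (hd : f.IsHomogeneous (4 * k)) :
    ∃ c d : ℂ, f = c • px ^ k + d • py k := by
  have : f ∈ Submodule.span ℂ {px ^ k, py k} := by
    refine inv_mem hk hΓ hf (fun d => d = 4 * k) (degree_support hd) _ ?_
    intro b j h
    rw [Submodule.mem_span_pair]
    obtain rfl | rfl : j = 0 ∨ j = 1 := by
      by_contra! hj
      have : k * 2 ≤ k * j := Nat.mul_le_mul_left k (by omega)
      nlinarith
    · obtain rfl : b = 2 * k := by omega
      refine ⟨2, 0, ?_⟩
      rw [px, ← C_mul', map_ofNat, pow_mul (-1 : P2)]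
      simp
      ring
    · obtain rfl : b = 0 := by omega
      refine ⟨2, -4, ?_⟩
      have := sum_eq k
      rw [← C_mul', ← C_mul', map_neg, map_ofNat, map_ofNat]
      simp only [pow_zero, mul_one, one_mul]
      linear_combination -this
  obtain ⟨a, b, h⟩ := Submodule.mem_span_pair.1 this
  exact ⟨a, b, h.symm⟩

lemma px_hom : px.IsHomogeneous 4 :=
  ((isHomogeneous_X ℂ (0 : Fin 2)).pow 2).mul ((isHomogeneous_X ℂ (1 : Fin 2)).pow 2)

lemma py_hom (k : ℕ) : (py k).IsHomogeneous (4 * k) := by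
  have h : ∀ i : Fin 2, (X i ^ (4 * k) : P2).IsHomogeneous (4 * k) := fun i => by
    simpa using (isHomogeneous_X ℂ i).pow (4 * k)
  have h2 : (2 * X 0 ^ (2 * k) * X 1 ^ (2 * k) : P2).IsHomogeneous (4 * k) := by
    have := ((isHomogeneous_C (Fin 2) (2 : ℂ)).mul ((isHomogeneous_X ℂ (0 : Fin 2)).pow (2 * k))).mul
      ((isHomogeneous_X ℂ (1 : Fin 2)).pow (2 * k))
    rw [map_ofNat, show 0 + 1 * (2 * k) + 1 * (2 * k) = 4 * k by ring] at this
    exact this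
  have := (isHomogeneous_C (Fin 2) (-(1/4) : ℂ)).mul (((h 0).sub h2).add (h 1))
  rw [zero_add] at this
  exact this

/-! ### Bracket and relation of the generators -/

lemma pb_xy (k : ℕ) (hk : 1 ≤ k) : pb px (py k) = C (8 * k : ℂ) * pz k := by
  obtain ⟨k, rfl⟩ : ∃ l, k = l + 1 := ⟨k - 1, by omega⟩
  have h8 : (C (8 * ((k + 1 : ℕ) : ℂ)) : P2) = 8 * (k + 1) := by
    rw [C_mul, map_ofNat]; simp
  rw [h8, pb, px, py, pz, C_neg]
  simp only [Derivation.leibniz, Derivation.map_sub, Derivation.map_add, Derivation.leibniz_pow,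
    pderiv_X_self, pderiv_X_of_ne (show (1 : Fin 2) ≠ 0 by decide), pderiv_C,
    pderiv_X_of_ne (show (0 : Fin 2) ≠ 1 by decide), smul_eq_mul, nsmul_eq_mul, map_neg]
  have t : ∀ i : Fin 2, pderiv i (2 : P2) = 0 := fun i => by
    rw [show (2 : P2) = C 2 from (map_ofNat C 2).symm, pderiv_C]
  simp only [t]
  push_cast
  rw [show 4 * (k + 1) - 1 = 4 * k + 3 by omega, show 2 * (k + 1) - 1 = 2 * k + 1 by omega]
  ring

/-- The equation of the Kleinian singularity `Spec R` of type `D_n`. -/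
lemma rel_s2 (k : ℕ) : pz k ^ 2 = px * py k ^ 2 - px ^ (k + 1) * py k := by
  have h : px ^ (k + 1) = px * (X 0 ^ (2 * k) * X 1 ^ (2 * k)) := by
    rw [px, pow_succ', mul_pow, ← pow_mul, ← pow_mul]
  rw [h, py, pz, px, C_neg]
  linear_combination ((C (1/4) * X 0 ^ (2*k+2) * X 1 ^ (2*k+2) *
    (X 0 ^ (2*k) - X 1 ^ (2*k))^2) : P2) * C4

/-- The values of `x`, `x^k`, `y` at the point `(u, 1)` with `u^{2k} = t`. -/
lemma eval_pt {k : ℕ} (hk : 1 ≤ k) (t : ℂ) : ∃ (φ : P2 →ₐ[ℂ] ℂ) (p : ℂ), p ^ k = t ∧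
    φ px = p ∧ φ (py k) = -(1/4) * (t - 1) ^ 2 := by
  obtain ⟨u, hu⟩ := IsAlgClosed.exists_pow_nat_eq t (show 0 < 2 * k by omega)
  refine ⟨aeval ![u, 1], u ^ 2, by rw [← pow_mul, hu], by simp [px], ?_⟩
  have h4 : u ^ (4 * k) = t ^ 2 := by rw [← hu, ← pow_mul]; congr 1; ring
  simp [py, hu, h4]
  ring

lemma pz_ne {k : ℕ} (hk : 1 ≤ k) : pz k ≠ 0 := by
  intro h
  obtain ⟨φ, p, h1, h2, h3⟩ := eval_pt hk 3
  have := congrArg φ (rel_s2 k)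
  rw [h] at this
  simp only [map_pow, map_sub, map_mul, h2, h3, map_zero, pow_succ p, h1] at this
  have hp : p = 0 := by linear_combination -this / 4
  rw [hp, zero_pow (by omega)] at h1
  norm_num at h1

lemma alg_ext {k : ℕ} (hk : 1 ≤ k) {Γ : Subgroup SL2} (hΓ : IsBD k Γ)
    (hx : px ∈ invRing Γ) (hy : py k ∈ invRing Γ) (hz : pz k ∈ invRing Γ)
    (f g : invRing Γ →ₐ[ℂ] invRing Γ) (h1 : f ⟨px, hx⟩ = g ⟨px, hx⟩)
    (h2 : f ⟨py k, hy⟩ = g ⟨py k, hy⟩) (h3 : f ⟨pz k, hz⟩ = g ⟨pz k, hz⟩) (r : invRing Γ) :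
    f r = g r := by
  have h : Algebra.adjoin ℂ {px, py k, pz k} ≤ (AlgHom.equalizer f g).map (invRing Γ).val := by
    rw [Algebra.adjoin_le_iff]
    rintro q (rfl | rfl | rfl)
    · exact ⟨⟨_, hx⟩, h1, rfl⟩
    · exact ⟨⟨_, hy⟩, h2, rfl⟩
    · exact ⟨⟨_, hz⟩, h3, rfl⟩
  obtain ⟨r', hr', he⟩ := h (inv_le_adjoin hk hΓ r.2)
  obtain rfl : r' = r := Subtype.ext he
  exact hr'

/-- The term `{y, x^k} = -8k² x^{k-1} z` is a scalar multiple of `z` for `k = 1`, and does not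
occur for `b = 0`. -/
lemma pb_lin (k : ℕ) (hk : 1 ≤ k) (a b c d : ℂ) (hbk : b = 0 ∨ k = 1) :
    pb (a • px + b • py k) (c • px ^ k + d • py k) = (8 * k * (a * d - b * c)) • pz k := by
  have h := pb_xy k hk
  have h0 : pb px (px ^ k) = 0 := by
    simp only [pb, Derivation.leibniz_pow, smul_eq_mul, nsmul_eq_mul]; ring
  have key : pb (a • px + b • py k) (c • px ^ k + d • py k)
      = C a * C c * pb px (px ^ k) + C a * C d * pb px (py k) + C b * C c * pb (py k) (px ^ k) := by
    simp only [pb, map_add, smul_eq_C_mul, pderiv_C_mul]; ring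
  rw [key, h0, h, smul_eq_C_mul]
  rcases hbk with rfl | rfl
  · simp only [C_mul, C_sub, C_0]; ring
  · have : pb (py 1) (px ^ 1) = - pb px (py 1) := by rw [pow_one, pb, pb]; ring
    rw [this, h]
    simp only [C_mul, C_sub]; ring

/-! ### Graded (anti-)Poisson automorphisms -/

/-- The graded shape of `R` and the identity `{x, y} = 8k z` determine a graded (anti-)Poisson
automorphism up to four scalars; `s = 1` is the Poisson and `s = -1` the anti-Poisson case. -/
lemma aut_form {k : ℕ} (hk : 1 ≤ k) {Γ : Subgroup SL2} (hΓ : IsBD k Γ)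
    (hx : px ∈ invRing Γ) (hy : py k ∈ invRing Γ) (hz : pz k ∈ invRing Γ)
    (θ : invRing Γ ≃ₐ[ℂ] invRing Γ) (hg : IsGradedAut Γ θ) (s : ℂ)
    (hs : ∀ f g h : invRing Γ, (h : P2) = pb (f : P2) (g : P2) →
      ((θ h : invRing Γ) : P2) = s • pb ((θ f : invRing Γ) : P2) ((θ g : invRing Γ) : P2)) :
    ∃ a b c d : ℂ, (b = 0 ∨ k = 1) ∧ θ ⟨px, hx⟩ = a • ⟨px, hx⟩ + b • ⟨py k, hy⟩ ∧
      θ ⟨py k, hy⟩ = c • ⟨px, hx⟩ ^ k + d • ⟨py k, hy⟩ ∧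
      θ ⟨pz k, hz⟩ = (s * (a * d - b * c)) • ⟨pz k, hz⟩ := by
  obtain ⟨a, b, hbk, h1⟩ : ∃ a b : ℂ, (b = 0 ∨ k = 1) ∧
      θ ⟨px, hx⟩ = a • ⟨px, hx⟩ + b • ⟨py k, hy⟩ := by
    rcases eq_or_lt_of_le hk with rfl | hk2
    · obtain ⟨a, b, h⟩ := deg_4k hk hΓ (θ ⟨px, hx⟩).2 (hg 4 _ px_hom)
      exact ⟨a, b, Or.inr rfl, Subtype.ext (by simpa using h)⟩
    · obtain ⟨a, h⟩ := deg_four hk2 hΓ (θ ⟨px, hx⟩).2 (hg 4 _ px_hom)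
      exact ⟨a, 0, Or.inl rfl, Subtype.ext (by simpa using h)⟩
  obtain ⟨c, d, h⟩ := deg_4k hk hΓ (θ ⟨py k, hy⟩).2 (hg _ _ (py_hom k))
  have h2 : θ ⟨py k, hy⟩ = c • ⟨px, hx⟩ ^ k + d • ⟨py k, hy⟩ := Subtype.ext (by simpa using h)
  refine ⟨a, b, c, d, hbk, h1, h2, ?_⟩
  have h3 := hs ⟨px, hx⟩ ⟨py k, hy⟩ ((8 * k : ℂ) • ⟨pz k, hz⟩)
    (by simp only [pb_xy k hk, SetLike.val_smul, smul_eq_C_mul])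
  rw [h1, h2] at h3
  have h4 := pb_lin k hk a b c d hbk
  have hk0 : (8 * k : ℂ) ≠ 0 := by
    have : (k : ℂ) ≠ 0 := by exact_mod_cast (by omega : k ≠ 0)
    simpa using this
  refine smul_right_injective _ hk0 (Subtype.ext ?_)
  simp only [map_smul, SetLike.val_smul, AddMemClass.coe_add, SubmonoidClass.coe_pow] at h3 ⊢
  rw [h3, h4, smul_smul, smul_smul]
  congr 1
  ring

/-! ### Anti-Poisson involutions from substitutions -/

/-- The involutive substitution `u ↦ ζ v, v ↦ ζ⁻¹ u`, of determinant `-1`. -/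
def sw (ζ : ℂ) : P2 →ₐ[ℂ] P2 := aeval ![C ζ * X 1, C ζ⁻¹ * X 0]

/-- A linear substitution multiplies the bracket by its determinant, here `-1`. -/
lemma pb_sw {ζ : ℂ} (hζ : ζ ≠ 0) (f g : P2) : sw ζ (pb f g) = - pb (sw ζ f) (sw ζ g) := by
  have hC : (C ζ * C ζ⁻¹ : P2) = 1 := by rw [← C_mul, mul_inv_cancel₀ hζ, C_1]
  have h0 : ∀ f, pderiv 0 (sw ζ f) = C ζ⁻¹ * sw ζ (pderiv 1 f) := by
    intro f
    induction f using MvPolynomial.induction_on with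
    | C a => simp [sw, algebraMap_eq]
    | add p q hp hq => simp only [map_add, hp, hq, mul_add]
    | mul_X p i hp =>
      simp only [map_mul, Derivation.leibniz, hp, map_add, smul_eq_mul]
      fin_cases i <;> simp [sw] <;> ring
  have h1 : ∀ f, pderiv 1 (sw ζ f) = C ζ * sw ζ (pderiv 0 f) := by
    intro f
    induction f using MvPolynomial.induction_on with
    | C a => simp [sw, algebraMap_eq]
    | add p q hp hq => simp only [map_add, hp, hq, mul_add]
    | mul_X p i hp =>
      simp only [map_mul, Derivation.leibniz, hp, map_add, smul_eq_mul]
      fin_cases i <;> simp [sw] <;> ring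
  simp only [pb, h0, h1, map_sub, map_mul]
  linear_combination (sw ζ (pderiv 0 g) * sw ζ (pderiv 1 f)
    - sw ζ (pderiv 1 g) * sw ζ (pderiv 0 f)) * hC

lemma sw_sw {ζ : ℂ} (hζ : ζ ≠ 0) : ∀ f, sw ζ (sw ζ f) = f := by
  have hC : (C ζ * C ζ⁻¹ : P2) = 1 := by rw [← C_mul, mul_inv_cancel₀ hζ, C_1]
  have : (sw ζ).comp (sw ζ) = AlgHom.id ℂ P2 := by
    apply MvPolynomial.algHom_ext
    intro i
    fin_cases i
    · simp [sw, algebraMap_eq]; linear_combination X 0 * hC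
    · simp [sw, algebraMap_eq]; linear_combination X 1 * hC
  exact fun f => DFunLike.congr_fun this f
lemma sw_hom (ζ : ℂ) {f : P2} {d : ℕ} (hf : f.IsHomogeneous d) : (sw ζ f).IsHomogeneous d := by
  have := hf.aeval (![C ζ * X 1, C ζ⁻¹ * X 0] : Fin 2 → P2) (n := 1) (fun i => by
    fin_cases i
    · simpa using (isHomogeneous_C _ ζ).mul (isHomogeneous_X ℂ (1 : Fin 2))
    · simpa using (isHomogeneous_C _ ζ⁻¹).mul (isHomogeneous_X ℂ (0 : Fin 2)))
  rw [one_mul] at this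
  exact this

lemma sw_mem {k : ℕ} (hk : 1 ≤ k) {Γ : Subgroup SL2} (hΓ : IsBD k Γ) {ζ : ℂ}
    (hx : sw ζ px ∈ invRing Γ) (hy : sw ζ (py k) ∈ invRing Γ) (hz : sw ζ (pz k) ∈ invRing Γ) :
    ∀ f ∈ invRing Γ, sw ζ f ∈ invRing Γ := by
  have : Algebra.adjoin ℂ {px, py k, pz k} ≤ (invRing Γ).comap (sw ζ) := by
    rw [Algebra.adjoin_le_iff]
    rintro q (rfl | rfl | rfl) <;> rw [SetLike.mem_coe, Subalgebra.mem_comap]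
    exacts [hx, hy, hz]
  exact fun f hf => (Subalgebra.mem_comap _ _ _).1 (this (inv_le_adjoin hk hΓ hf))

/-- An involutive endomorphism of an algebra restricts to an automorphism of every subalgebra it
preserves. -/
lemma exists_restrict {A : Type*} [CommRing A] [Algebra ℂ A] (S : Subalgebra ℂ A) (s : A →ₐ[ℂ] A)
    (hm : ∀ f ∈ S, s f ∈ S) (hs : ∀ f, s (s f) = f) :
    ∃ θ : S ≃ₐ[ℂ] S, ∀ f, ((θ f : S) : A) = s f := by
  obtain ⟨φ, hφ⟩ : ∃ φ : S →ₐ[ℂ] S, ∀ f, ((φ f : S) : A) = s f :=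
    ⟨(s.comp S.val).codRestrict S fun f => hm f f.2, fun f => rfl⟩
  have hφφ : φ.comp φ = AlgHom.id ℂ S :=
    AlgHom.ext fun f => Subtype.ext (by rw [AlgHom.comp_apply, hφ, hφ, hs, AlgHom.id_apply])
  exact ⟨AlgEquiv.ofAlgHom φ φ hφφ hφφ, fun f => by rw [AlgEquiv.ofAlgHom_apply, hφ]⟩

/-- Every substitution `sw ζ` mapping the generators into `R` restricts to an anti-Poisson
involution of `R`. -/
lemma exists_inv {k : ℕ} (hk : 1 ≤ k) {Γ : Subgroup SL2} (hΓ : IsBD k Γ) {ζ : ℂ} (hζ : ζ ≠ 0)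
    (hx : sw ζ px ∈ invRing Γ) (hy : sw ζ (py k) ∈ invRing Γ) (hz : sw ζ (pz k) ∈ invRing Γ) :
    ∃ θ : invRing Γ ≃ₐ[ℂ] invRing Γ, IsAntiPoissonInv Γ θ ∧
      ∀ f, ((θ f : invRing Γ) : P2) = sw ζ f := by
  obtain ⟨θ, hθ⟩ := exists_restrict (invRing Γ) (sw ζ) (sw_mem hk hΓ hx hy hz) (sw_sw hζ)
  refine ⟨θ, ⟨?_, fun f => Subtype.ext (by rw [hθ, hθ, sw_sw hζ]), ?_⟩, hθ⟩
  · intro d f hf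
    rw [hθ]
    exact sw_hom ζ hf
  · intro f g h hh
    rw [hθ, hθ, hθ, hh, pb_sw hζ]

lemma sw_px {ζ : ℂ} (hζ : ζ ≠ 0) : sw ζ px = px := by
  have hC : (C ζ * C ζ⁻¹ : P2) = 1 := by rw [← C_mul, mul_inv_cancel₀ hζ, C_1]
  simp only [sw, px, map_mul, map_pow, aeval_X, Matrix.cons_val_zero, Matrix.cons_val_one]
  linear_combination (X 0 ^ 2 * X 1 ^ 2 * (C ζ * C ζ⁻¹ + 1) : P2) * hC

lemma sw_py {k : ℕ} {ζ : ℂ} {e : ℂ} (hζ : ζ ≠ 0) (he : ζ ^ (4 * k) = e) (he' : ζ⁻¹ ^ (4 * k) = e) :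
    sw ζ (py k) = MvPolynomial.C (-(1/4) : ℂ) * (C e * (X 0 : P2) ^ (4 * k)
      - 2 * (X 0 : P2) ^ (2 * k) * (X 1 : P2) ^ (2 * k) + C e * (X 1 : P2) ^ (4 * k)) := by
  have hC : (C ζ ^ (2 * k) * C ζ⁻¹ ^ (2 * k) : P2) = 1 := by
    rw [← mul_pow, ← C_mul, mul_inv_cancel₀ hζ, C_1, one_pow]
  have h1 : (C ζ ^ (4 * k) : P2) = C e := by rw [← C_pow, he]
  have h2 : (C ζ⁻¹ ^ (4 * k) : P2) = C e := by rw [← C_pow, he']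
  simp only [sw, py, map_mul, map_pow, map_add, map_sub, map_ofNat, aeval_X, algHom_C,
    algebraMap_eq, Matrix.cons_val_zero, Matrix.cons_val_one, mul_pow, h1, h2]
  linear_combination (- C (-(1/4)) * 2 * X 0 ^ (2 * k) * X 1 ^ (2 * k) : P2) * hC

lemma sw_pz {k : ℕ} {ζ : ℂ} {e : ℂ} (hζ : ζ ≠ 0) (he : ζ ^ (4 * k) = e) (he' : ζ⁻¹ ^ (4 * k) = e) :
    sw ζ (pz k) = - (C e * pz k) := by
  have hC : (C ζ * C ζ⁻¹ : P2) = 1 := by rw [← C_mul, mul_inv_cancel₀ hζ, C_1]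
  have h1 : (C ζ ^ (4 * k) : P2) = C e := by rw [← C_pow, he]
  have h2 : (C ζ⁻¹ ^ (4 * k) : P2) = C e := by rw [← C_pow, he']
  simp only [sw, pz, map_mul, map_pow, map_sub, aeval_X, algHom_C,
    algebraMap_eq, Matrix.cons_val_zero, Matrix.cons_val_one, mul_pow, h1, h2]
  linear_combination (C (1/4) * X 0 * X 1 * C e * (X 1 ^ (4 * k) - X 0 ^ (4 * k)) : P2) * hC

/-! ### Classification -/

/-- The anti-Poisson involutions of `R`: `θ₁`, `θ₂` and, for `n = 4` only, the two other
transpositions of the linear factors of `x y (x - y)`. -/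
lemma scalars {k : ℕ} (hk : 1 ≤ k) {Γ : Subgroup SL2} (hΓ : IsBD k Γ)
    (hx : px ∈ invRing Γ) (hy : py k ∈ invRing Γ) (hz : pz k ∈ invRing Γ)
    (θ : invRing Γ ≃ₐ[ℂ] invRing Γ) (hθ : IsAntiPoissonInv Γ θ) :
    Vals Γ θ ⟨px, hx⟩ ⟨py k, hy⟩ ⟨pz k, hz⟩ ⟨px, hx⟩ ⟨py k, hy⟩ (-⟨pz k, hz⟩) ∨
    Vals Γ θ ⟨px, hx⟩ ⟨py k, hy⟩ ⟨pz k, hz⟩ ⟨px, hx⟩ (⟨px, hx⟩ ^ k - ⟨py k, hy⟩) ⟨pz k, hz⟩ ∨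
    (k = 1 ∧ Vals Γ θ ⟨px, hx⟩ ⟨py k, hy⟩ ⟨pz k, hz⟩
      (⟨py k, hy⟩ - ⟨px, hx⟩) ⟨py k, hy⟩ ⟨pz k, hz⟩) ∨
    (k = 1 ∧ Vals Γ θ ⟨px, hx⟩ ⟨py k, hy⟩ ⟨pz k, hz⟩
      (-⟨py k, hy⟩) (-⟨px, hx⟩) ⟨pz k, hz⟩) := by
  obtain ⟨hg, hi, hp⟩ := hθ
  obtain ⟨a, b, c, d, hbk, h1, h2, h3⟩ := aut_form hk hΓ hx hy hz θ hg (-1)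
    (fun f g h hh => by rw [hp f g h hh, neg_one_smul])
  have hrel : (⟨pz k, hz⟩ : invRing Γ) ^ 2
      = ⟨px, hx⟩ * ⟨py k, hy⟩ ^ 2 - ⟨px, hx⟩ ^ (k + 1) * ⟨py k, hy⟩ := Subtype.ext (rel_s2 k)
  have hR := congrArg θ hrel
  simp only [map_pow, map_sub, map_mul, h1, h2, h3] at hR
  rw [smul_pow, hrel] at hR
  have hX := hi ⟨px, hx⟩
  rw [h1, map_add, map_smul, map_smul, h1, h2] at hX
  have hY := hi ⟨py k, hy⟩
  rw [h2, map_add, map_smul, map_smul, map_pow, h1, h2] at hY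
  -- `θ²(x) = x`, `θ²(y) = y` and the image of the relation, at the point with `u^{2k} = t`, `v = 1`
  have ev : ∀ t : ℂ, ∃ p : ℂ, p ^ k = t ∧ ∃ q, q = -(1/4) * (t - 1) ^ 2 ∧
      (a * (a * p + b * q) + b * (c * t + d * q) = p ∧
      c * (a * p + b * q) ^ k + d * (c * t + d * q) = q ∧
      (-1 * (a * d - b * c)) ^ 2 * (p * q ^ 2 - p ^ (k + 1) * q) =
        (a * p + b * q) * (c * t + d * q) ^ 2 -
          (a * p + b * q) ^ (k + 1) * (c * t + d * q)) := by
    intro t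
    obtain ⟨φ, p, hpk, hpx, hpy⟩ := eval_pt hk t
    refine ⟨p, hpk, _, rfl, ?_, ?_, ?_⟩
    · have := congrArg (fun r : invRing Γ => φ r) hX
      simp only [AddMemClass.coe_add, SetLike.val_smul, SubmonoidClass.coe_pow, map_add, map_smul,
        map_pow, hpx, hpy, hpk, smul_eq_mul] at this
      exact this
    · have := congrArg (fun r : invRing Γ => φ r) hY
      simp only [AddMemClass.coe_add, SetLike.val_smul, SubmonoidClass.coe_pow, map_add, map_smul,
        map_pow, hpx, hpy, hpk, smul_eq_mul] at this
      exact this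
    · have := congrArg (fun r : invRing Γ => φ r) hR
      simpa [hpx, hpy, hpk] using this
  -- at `t = 1` and `t = -1` one has `y = 0` and `y = x^k`, so the relation degenerates there
  obtain ⟨p0, hp0, q0, hq0, eX0, eY0, eR0⟩ := ev 0
  obtain ⟨p1, hp1, q1, hq1, eX1, eY1, eR1⟩ := ev 1
  obtain ⟨p2, hp2, q2, hq2, eX2, eY2, eR2⟩ := ev (-1)
  obtain ⟨p3, hp3, q3, hq3, eX3, eY3, eR3⟩ := ev 3
  have hk0 : k ≠ 0 := by omega
  norm_num at hq0 hq1 hq2 hq3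
  subst hq0 hq1 hq2 hq3
  obtain rfl : p0 = 0 := by simpa [hk0] using hp0
  by_cases hb : b = 0
  · subst hb
    have hne : ∀ {p t : ℂ}, p ^ k = t → t ≠ 0 → p ≠ 0 := by
      rintro p t h ht rfl
      rw [zero_pow hk0] at h
      exact ht h.symm
    have n1 := hne hp1 one_ne_zero
    have n2 := hne hp2 (by norm_num)
    have n3 := hne hp3 (by norm_num)
    simp only [zero_mul, add_zero, mul_pow, pow_succ, hp1, hp2, hp3, sub_zero, mul_zero, zero_pow hk0]
      at eX0 eX1 eX2 eX3 eY0 eR1 eR2 eR3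
    have ha : a ^ 2 = 1 := mul_right_cancel₀ n1 (by linear_combination eX1)
    have hd : d ^ 2 = 1 := by linear_combination -4 * eY0
    have ha0 : a ≠ 0 := by rintro rfl; norm_num at ha
    have hd0 : d ≠ 0 := by rintro rfl; norm_num at hd
    have hA : (a ^ k) ^ 2 = 1 := by rw [← pow_mul, mul_comm, pow_mul, ha, one_pow]
    generalize hAk : a ^ k = A at *
    have E1 : c * (c - A) = 0 := by
      apply mul_left_cancel₀ (mul_ne_zero ha0 n1); linear_combination -eR1
    have E2 : (c + d) * (c + d - A) = 0 := by
      apply mul_left_cancel₀ (mul_ne_zero ha0 n2); linear_combination -eR2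
    have E3 : 4 = a * ((3 * c - d) ^ 2 - 3 * A * (3 * c - d)) := by
      apply mul_left_cancel₀ n3
      linear_combination eR3 - 4 * p3 * d ^ 2 * ha - 4 * p3 * hd
    rcases mul_eq_zero.1 E1 with hc | hc
    · subst hc
      have hdA : d = A := by
        rcases mul_eq_zero.1 E2 with h | h
        · exact absurd (by simpa using h) hd0
        · linear_combination h
      have ha1 : a = 1 := by
        subst hdA; linear_combination -E3 / 4 - a * hd
      subst ha1
      obtain rfl : A = 1 := by rw [← hAk, one_pow]
      subst hdA
      refine Or.inl ⟨?_, ?_, ?_⟩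
      · simpa using h1
      · simpa using h2
      · simpa using h3
    · obtain rfl : c = A := by linear_combination hc
      have hdA : d = -c := by
        rcases mul_eq_zero.1 E2 with h | h
        · linear_combination h
        · exact absurd (by linear_combination h) hd0
      subst hdA
      have ha1 : a = 1 := by linear_combination -E3 / 4 - a * hA
      subst ha1
      obtain rfl : c = 1 := by rw [← hAk, one_pow]
      refine Or.inr (Or.inl ⟨?_, ?_, ?_⟩)
      · simpa using h1
      · simpa [sub_eq_add_neg] using h2
      · simpa using h3
  · obtain rfl : k = 1 := hbk.resolve_left hb
    simp only [pow_one] at hp1 hp2 hp3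
    subst hp1 hp2 hp3
    norm_num at eX0 eX1 eR0 eR1 eR2 eR3
    have hda : d = -a := by
      apply mul_left_cancel₀ hb; linear_combination -4 * eX0
    have hdet : a ^ 2 + b * c = 1 := by linear_combination eX1
    have E0 : d = 0 ∨ d = b := by
      have : d * (d - b) = 0 := by
        apply mul_left_cancel₀ hb; linear_combination 64 * eR0
      rcases mul_eq_zero.1 this with h | h
      · exact Or.inl h
      · exact Or.inr (by linear_combination h)
    subst hda
    rcases E0 with h0 | h0
    · obtain rfl : a = 0 := by linear_combination -h0
      have hbc : b = c := by
        have : b * c * (b - c) = 0 := by linear_combination -eR2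
        have hbc1 : b * c = 1 := by linear_combination hdet
        rw [hbc1] at this
        linear_combination this
      subst hbc
      have hb1 : b = -1 := by linear_combination eR3 / 12 - (b + 1 + b ^ 2) * hdet
      subst hb1
      refine Or.inr (Or.inr (Or.inr ⟨rfl, ?_, ?_, ?_⟩))
      · simpa using h1
      · simpa using h2
      · simpa using h3
    · obtain rfl : b = -a := h0.symm
      have ha0 : a ≠ 0 := by rintro rfl; simp at hb
      have hc : c = 0 := by linear_combination -c * hdet + eR1
      subst hc
      have ha1 : a = -1 := by linear_combination eR3 / 12 - (a + 1 + a ^ 2) * hdet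
      subst ha1
      refine Or.inr (Or.inr (Or.inl ⟨rfl, ?_, ?_, ?_⟩))
      · simpa [sub_eq_add_neg, add_comm] using h1
      · simpa using h2
      · simpa using h3

/-- The theorem with `n = 2k + 2` substituted in all exponents. -/
lemma core_s2 (k : ℕ) (hk : 1 ≤ k) (Γ : Subgroup SL2) (hΓ : IsBD k Γ)
    (hx : px ∈ invRing Γ) (hy : py k ∈ invRing Γ) (hz : pz k ∈ invRing Γ) :
    let x : invRing Γ := ⟨px, hx⟩
    let y : invRing Γ := ⟨py k, hy⟩
    let z : invRing Γ := ⟨pz k, hz⟩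
    ((∃ θ₁, IsAntiPoissonInv Γ θ₁ ∧ Vals Γ θ₁ x y z x y (-z)) ∧
     (∃ θ₂, IsAntiPoissonInv Γ θ₂ ∧ Vals Γ θ₂ x y z x (x ^ k - y) z) ∧
     ∀ θ₁ θ₂ : invRing Γ ≃ₐ[ℂ] invRing Γ,
       IsAntiPoissonInv Γ θ₁ → Vals Γ θ₁ x y z x y (-z) →
       IsAntiPoissonInv Γ θ₂ → Vals Γ θ₂ x y z x (x ^ k - y) z →
         (∀ θ, IsAntiPoissonInv Γ θ → APIConj Γ θ₁ θ ∨ APIConj Γ θ₂ θ) ∧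
         ¬ APIConj Γ θ₁ θ₂) := by
  intro x y z
  have hex : ∀ ζ e : ℂ, ζ ≠ 0 → ζ ^ (4 * k) = e → ζ⁻¹ ^ (4 * k) = e → ∀ y' z' : invRing Γ,
      (y' : P2) = MvPolynomial.C (-(1/4) : ℂ) * (C e * (X 0 : P2) ^ (4 * k)
        - 2 * (X 0 : P2) ^ (2 * k) * (X 1 : P2) ^ (2 * k) + C e * (X 1 : P2) ^ (4 * k)) →
      (z' : P2) = - (C e * pz k) →
      ∃ θ, IsAntiPoissonInv Γ θ ∧ Vals Γ θ x y z x y' z' := by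
    intro ζ e hζ he he' y' z' hy' hz'
    rw [← sw_py hζ he he'] at hy'
    rw [← sw_pz hζ he he'] at hz'
    obtain ⟨θ, h, hv⟩ := exists_inv hk hΓ hζ (by rw [sw_px hζ]; exact hx)
      (by rw [← hy']; exact y'.2) (by rw [← hz']; exact z'.2)
    exact ⟨θ, h, Subtype.ext ((hv x).trans (sw_px hζ)), Subtype.ext ((hv y).trans hy'.symm),
      Subtype.ext ((hv z).trans hz'.symm)⟩
  refine ⟨?_, ?_, ?_⟩
  · apply hex 1 1 one_ne_zero (by simp) (by simp)
    · simp [y, py]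
    · simp [z]
  · obtain ⟨ζ, hζ⟩ := IsAlgClosed.exists_pow_nat_eq (-1 : ℂ) (show 0 < 4 * k by omega)
    apply hex ζ (-1) (by rintro rfl; rw [zero_pow (by omega)] at hζ; norm_num at hζ) hζ
      (by rw [inv_pow, hζ]; norm_num)
    · simp only [AddSubgroupClass.coe_sub, SubmonoidClass.coe_pow, x, y]
      have h := sum_eq k
      rw [px, py, mul_pow, ← pow_mul, ← pow_mul, C_neg, C_neg, C_1]
      linear_combination (- X 0 ^ (2 * k) * X 1 ^ (2 * k) : P2) * C4
    · simp [z]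
  · intro θ₁ θ₂ hθ₁ ⟨hx₁, hy₁, hz₁⟩ hθ₂ ⟨hx₂, hy₂, hz₂⟩
    have id_conj : ∀ θ θ' : invRing Γ ≃ₐ[ℂ] invRing Γ, θ x = θ' x → θ y = θ' y → θ z = θ' z →
        APIConj Γ θ θ' := fun θ θ' h1 h2 h3 =>
      ⟨AlgEquiv.refl, ⟨fun d f h => h, fun f g h hh => hh⟩, fun f =>
        (alg_ext hk hΓ hx hy hz θ.toAlgHom θ'.toAlgHom h1 h2 h3 f).symm⟩
    -- conjugating by `θ₂ ∘ θ` works as soon as `(θ₂ ∘ θ)³ = 1`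
    have braid : ∀ θ : invRing Γ ≃ₐ[ℂ] invRing Γ, IsAntiPoissonInv Γ θ →
        (∀ f ∈ ({x, y, z} : Set (invRing Γ)), θ f = θ₂ (θ (θ₂ (θ (θ₂ f))))) →
        APIConj Γ θ₂ θ := by
      intro θ hθ h
      have hsymm : ∀ f, (θ.trans θ₂).symm f = θ (θ₂ f) := fun f => by
        rw [AlgEquiv.symm_apply_eq, AlgEquiv.trans_apply, hθ.2.1, hθ₂.2.1]
      refine ⟨θ.trans θ₂, ⟨fun d f hf => hθ₂.1 d _ (hθ.1 d f hf), ?_⟩, fun f => ?_⟩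
      · intro f g r hr
        have h1 := hθ.2.2 f g r hr
        have h2 := hθ₂.2.2 (θ f) (θ g) (-θ r) (by simp [h1])
        simpa using h2
      · rw [hsymm]
        exact alg_ext hk hΓ hx hy hz θ.toAlgHom
          ((((θ₂.trans θ).trans θ₂).trans θ).trans θ₂).toAlgHom
          (h x (by simp)) (h y (by simp)) (h z (by simp)) f
    constructor
    · intro θ hθ
      rcases scalars hk hΓ hx hy hz θ hθ with ⟨h1, h2, h3⟩ | ⟨h1, h2, h3⟩ | ⟨rfl, h1, h2, h3⟩ |
        ⟨rfl, h1, h2, h3⟩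
      · exact Or.inl (id_conj _ _ (hx₁.trans h1.symm) (hy₁.trans h2.symm) (hz₁.trans h3.symm))
      · exact Or.inr (id_conj _ _ (hx₂.trans h1.symm) (hy₂.trans h2.symm) (hz₂.trans h3.symm))
      all_goals
        rw [pow_one] at hy₂
        refine Or.inr (braid θ hθ ?_)
        simp only [Set.mem_insert_iff, Set.mem_singleton_iff, forall_eq_or_imp, forall_eq]
      · change θ x = y - x at h1
        change θ y = y at h2
        change θ z = z at h3
        simp only [hx₂, hy₂, hz₂, h1, h2, h3, map_sub]
        exact ⟨by abel, by abel, trivial⟩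
      · change θ x = -y at h1
        change θ y = -x at h2
        change θ z = z at h3
        simp only [hx₂, hy₂, hz₂, h1, h2, h3, map_sub, map_neg]
        exact ⟨by abel, by abel, trivial⟩
    · rintro ⟨σ, ⟨hσ, hp⟩, hc⟩
      obtain ⟨a, b, c, d, -, -, -, h⟩ := aut_form hk hΓ hx hy hz σ hσ 1
        (fun f g h hh => by rw [hp f g h hh, one_smul])
      change σ z = _ • z at h
      -- `θ₂ (σ z) = -σ z` by conjugacy, but `σ z` is a multiple of `z`, which `θ₂` fixes
      have h1 := hc (σ z)
      rw [AlgEquiv.symm_apply_apply, hz₁, map_neg, h, map_smul, hz₂, ← h] at h1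
      have h2 : σ z = 0 := self_eq_neg.1 h1
      rw [map_eq_zero_iff σ σ.injective] at h2
      exact pz_ne hk (congrArg Subtype.val h2)

/-- classification of anti-Poisson involutions in type `Dₙ`, `n` even. -/
theorem stmt2 (n : ℕ) (hn : 4 ≤ n) (heven : Even n) (Γ : Subgroup SL2)
    (hΓ : ∀ g : SL2, g ∈ Γ ↔ ∃ ε : ℂ, ε ^ (2 * (n - 2)) = 1 ∧
      ((g : Matrix (Fin 2) (Fin 2) ℂ) = !![ε, 0; 0, ε⁻¹] ∨
       (g : Matrix (Fin 2) (Fin 2) ℂ) = !![0, ε; -ε⁻¹, 0]))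
    (hx : (X 0 : P2) ^ 2 * (X 1 : P2) ^ 2 ∈ invRing Γ)
    (hy : MvPolynomial.C (-(1/4) : ℂ) *
      ((X 0 : P2) ^ (2 * n - 4) - 2 * (X 0 : P2) ^ (n - 2) * (X 1 : P2) ^ (n - 2)
        + (X 1 : P2) ^ (2 * n - 4)) ∈ invRing Γ)
    (hz : MvPolynomial.C ((1/4) : ℂ) *
      ((X 0 : P2) * (X 1 : P2) * ((X 0 : P2) ^ (2 * n - 4) - (X 1 : P2) ^ (2 * n - 4)))
        ∈ invRing Γ) :
    let x : invRing Γ := ⟨(X 0 : P2) ^ 2 * (X 1 : P2) ^ 2, hx⟩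
    let y : invRing Γ := ⟨MvPolynomial.C (-(1/4) : ℂ) *
      ((X 0 : P2) ^ (2 * n - 4) - 2 * (X 0 : P2) ^ (n - 2) * (X 1 : P2) ^ (n - 2)
        + (X 1 : P2) ^ (2 * n - 4)), hy⟩
    let z : invRing Γ := ⟨MvPolynomial.C ((1/4) : ℂ) *
      ((X 0 : P2) * (X 1 : P2) * ((X 0 : P2) ^ (2 * n - 4) - (X 1 : P2) ^ (2 * n - 4))), hz⟩
    -- (i) existence of the two anti-Poisson involutions
    ((∃ θ₁, IsAntiPoissonInv Γ θ₁ ∧ Vals Γ θ₁ x y z x y (-z)) ∧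
     (∃ θ₂, IsAntiPoissonInv Γ θ₂ ∧ Vals Γ θ₂ x y z x (x ^ ((n - 2) / 2) - y) z) ∧
     -- (ii), (iii)
     ∀ θ₁ θ₂ : invRing Γ ≃ₐ[ℂ] invRing Γ,
       IsAntiPoissonInv Γ θ₁ → Vals Γ θ₁ x y z x y (-z) →
       IsAntiPoissonInv Γ θ₂ → Vals Γ θ₂ x y z x (x ^ ((n - 2) / 2) - y) z →
         -- (ii) every anti-Poisson involution is conjugate to θ₁ or θ₂
         (∀ θ, IsAntiPoissonInv Γ θ → APIConj Γ θ₁ θ ∨ APIConj Γ θ₂ θ) ∧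
         -- (iii) θ₁ and θ₂ are not conjugate
         ¬ APIConj Γ θ₁ θ₂) := by
  obtain ⟨k, rfl, hk⟩ : ∃ k, n = 2 * k + 2 ∧ 1 ≤ k := by
    obtain ⟨l, rfl⟩ := heven
    exact ⟨l - 1, by omega, by omega⟩
  revert hΓ hx hy hz
  rw [show 2 * (2 * k + 2) - 4 = 4 * k by omega, show 2 * k + 2 - 2 = 2 * k by omega,
    show 2 * k / 2 = k by omega, show 2 * (2 * k) = 4 * k by ring]
  intro hx hΓ hy hz
  exact core_s2 k hk Γ hΓ hx hy hz
end
end
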